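/- arXiv:1301.5401 — 2 statements merged into one kernel-verified Lean document; each statement's English description precedes it below -/
import Mathlib

section
/- Let n, k be positive integers with n ≥ k. The function W := T^Sp(·; n) * Wg^U(·; 2n) on S_{2k} is ε-biinvariant and satisfies T^Sp(·; n − 1/2) ⋆ W = 1_k^ε; consequently W coincides with the symplectic Weingarten function Wg^Sp(·; n − 1/2) with half-integer parameter n − 1/2. -/
/-!
Put `x = -2n`, so that `T^Sp(·; n)` and `T^Sp(·; n - 1/2)` are, up to the factor `(-1)^k ε`, the
functions `x ^ c(σ)` and `(x + 1) ^ c(σ)`. Multiplication by `ε` respects convolution and turns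
`x ^ cyc(σ)` into `(2n) ^ cyc(σ)`. In the group algebra of `S_{2k}` write `U_x = ∑ x ^ cyc(σ) σ`,
`G_x = ∑ x ^ c(σ) σ` and `P = ∑_{ζ ∈ H_k} ζ`. The heart of the proof is the identity
`G_{x+1} G_x = |H_k| U_x P`, valid also for the opposite order of the factors on the left.

It follows from factorisations through the Jucys–Murphy elements `J_m = ∑_{j < m} (m j)`. Peeling
off one point at a time gives `U_x = ∏ (x + J_m)` over all points `m` (`cycSum_succ`), and peeling
off one pair at a time gives `G_x = ∏ (x + J_{lo i}) P` (`toGA_ccount`); the effect of a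
transposition on the number of cycles or components (`cyc_swap_mul`, `ccount_swap_mul`) is read off
from the number of two-colourings constant on them. If `s = (lo i, hi i)` then
`J_{hi i} s = s J_{lo i} + 1`, and since `G_{x+1}` and its partial products absorb `s` on the left,
applying `U_x` to `P` replaces each factor `x + J_{hi i}` by `x + 1 + J_{lo i}`
(`pow_smul_cycSum`). Hence `U_x P = ∏ (x + J_{lo i}) ∏ (x + 1 + J_{lo i}) P` (`toGA_cyc`), which is
`G_x G_{x+1} / |H_k|` by the left `H_k`-invariance of `G_{x+1}`.

The reduced convolution is the full one divided by `|H_k|`, because `M_{2k}` is a transversal of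
`S_{2k} / H_k` (`sum_Mset`). The unitary Weingarten function is central, being the inverse of a
class function; so `W` is `ε`-biinvariant, and cancelling `U` in the twisted identity gives
`T^Sp(·; n - 1/2) ⋆ W = 1_k^ε`. Finally `W * T^Sp(·; n - 1/2) * Wg^Sp`, evaluated in two ways,
identifies `W` with `Wg^Sp`.
-/

/-!
Weingarten calculus for classical compact Lie groups and compact symmetric spaces
(S. Matsumoto, "Weingarten calculus for matrix ensembles associated with compact
symmetric spaces"): common definitions.

We index `{1,…,m}` by `Fin m` (0-indexed), so the pair `{2r-1, 2r}` becomes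
`{2r, 2r+1}` for `r ∈ Fin k`.
-/

open MeasureTheory Finset Matrix

namespace WgPaper

/-- `lo r` is the (0-indexed) point `2r`, i.e. `2r - 1` in 1-indexed notation. -/
def lo {k : ℕ} (i : Fin k) : Fin (2 * k) := ⟨2 * (i : ℕ), by have := i.isLt; omega⟩

/-- `hi r` is the (0-indexed) point `2r + 1`, i.e. `2r` in 1-indexed notation. -/
def hi {k : ℕ} (i : Fin k) : Fin (2 * k) := ⟨2 * (i : ℕ) + 1, by have := i.isLt; omega⟩

/-- Number of cycles of a permutation, counting fixed points as 1-cycles. -/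
def cyc {m : ℕ} (σ : Equiv.Perm (Fin m)) : ℕ :=
  Multiset.card σ.cycleType + (Finset.univ.filter fun x => σ x = x).card

/-- Number of even-length cycles of a permutation. -/
def evenCycles {m : ℕ} (σ : Equiv.Perm (Fin m)) : ℕ :=
  Multiset.card (σ.cycleType.filter fun d => d % 2 = 0)

/-- Number of odd-length cycles of a permutation, counting fixed points as 1-cycles. -/
def oddCycles {m : ℕ} (σ : Equiv.Perm (Fin m)) : ℕ :=
  Multiset.card (σ.cycleType.filter fun d => d % 2 = 1)
    + (Finset.univ.filter fun x => σ x = x).card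

/-- The sign `ε(σ)` of a permutation, as an element of a commutative ring. -/
def sgn (R : Type*) [CommRing R] {m : ℕ} (σ : Equiv.Perm (Fin m)) : R :=
  ((Equiv.Perm.sign σ : ℤ) : R)

/-- Full convolution on a finite group: `(f * g)(σ) = ∑_τ f(τ) g(τ⁻¹ σ)`. -/
def conv {G : Type*} [Group G] [Fintype G] {R : Type*} [CommRing R] (f g : G → R) : G → R :=
  fun σ => ∑ τ : G, f τ * g (τ⁻¹ * σ)

/-- The Dirac function at the identity permutation. -/
def deltaId {m : ℕ} {R : Type*} [CommRing R] : Equiv.Perm (Fin m) → R :=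
  fun σ => if σ = 1 then 1 else 0

/-- The graph `Γ(σ)` on `{1,…,2k}` whose edges are `{2r-1, 2r}` and `{σ(2r-1), σ(2r)}`
(in 1-indexed notation) for `1 ≤ r ≤ k`. -/
def Gamma {k : ℕ} (σ : Equiv.Perm (Fin (2 * k))) : SimpleGraph (Fin (2 * k)) :=
  SimpleGraph.fromRel fun a b =>
    (∃ r : Fin k, a = lo r ∧ b = hi r) ∨ ∃ r : Fin k, a = σ (lo r) ∧ b = σ (hi r)

/-- `c(σ)`, the number of connected components of `Γ(σ)`. -/
noncomputable def ccount {k : ℕ} (σ : Equiv.Perm (Fin (2 * k))) : ℕ :=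
  Nat.card (Gamma σ).ConnectedComponent

/-- The number of vertices of a connected component of a graph. -/
noncomputable def compSize {V : Type*} {G : SimpleGraph V} (C : G.ConnectedComponent) : ℕ :=
  Nat.card {v // G.connectedComponentMk v = C}

/-- `ℓe(σ)`: the number of connected components of `Γ(σ)` whose size is `≡ 0 (mod 4)`. -/
noncomputable def ecomp {k : ℕ} (σ : Equiv.Perm (Fin (2 * k))) : ℕ :=
  Nat.card {C : (Gamma σ).ConnectedComponent // compSize C % 4 = 0}

/-- `ℓo(σ)`: the number of connected components of `Γ(σ)` whose size is `≡ 2 (mod 4)`. -/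
noncomputable def ocomp {k : ℕ} (σ : Equiv.Perm (Fin (2 * k))) : ℕ :=
  Nat.card {C : (Gamma σ).ConnectedComponent // compSize C % 4 = 2}

/-- Membership in the hyperoctahedral subgroup `H_k ≤ S_{2k}`: each pair
`{2i-1, 2i}` is mapped onto some pair `{2j-1, 2j}`. -/
def IsHyper {k : ℕ} (ζ : Equiv.Perm (Fin (2 * k))) : Prop :=
  ∀ i : Fin k, ∃ j : Fin k, ({ζ (lo i), ζ (hi i)} : Finset (Fin (2 * k))) = {lo j, hi j}

/-- The defining property of the set `M_{2k}` of coset representatives of `S_{2k}/H_k`: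
`σ(2i-1) < σ(2i)` for all `i` and `σ(1) < σ(3) < ⋯ < σ(2k-1)`. -/
def MProp {k : ℕ} (σ : Equiv.Perm (Fin (2 * k))) : Prop :=
  (∀ i : Fin k, σ (lo i) < σ (hi i)) ∧ ∀ i j : Fin k, i < j → σ (lo i) < σ (lo j)

open scoped Classical in
/-- The set `M_{2k}` of coset representatives of `S_{2k}/H_k`, as a `Finset`. -/
noncomputable def Mset (k : ℕ) : Finset (Equiv.Perm (Fin (2 * k))) :=
  Finset.univ.filter MProp

/-- Reduced convolution: `(f ⋆ g)(σ) = ∑_{τ ∈ M_{2k}} f(τ) g(τ⁻¹ σ)`. -/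
noncomputable def sconv {k : ℕ} {R : Type*} [CommRing R]
    (f g : Equiv.Perm (Fin (2 * k)) → R) : Equiv.Perm (Fin (2 * k)) → R :=
  fun σ => ∑ τ ∈ Mset k, f τ * g (τ⁻¹ * σ)

open scoped Classical in
/-- The indicator function `1_k` of `H_k`. -/
noncomputable def oneH {k : ℕ} {R : Type*} [CommRing R] : Equiv.Perm (Fin (2 * k)) → R :=
  fun σ => if IsHyper σ then 1 else 0

open scoped Classical in
/-- The twisted indicator function `1_k^ε` of `H_k`: `σ ↦ ε(σ)` on `H_k`, `0` elsewhere. -/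
noncomputable def oneHeps {k : ℕ} {R : Type*} [CommRing R] : Equiv.Perm (Fin (2 * k)) → R :=
  fun σ => if IsHyper σ then sgn R σ else 0

/-- `δ_σ(i,j) = ∏_{s=1}^k δ_{i_{σ(s)}, j_s}`. -/
def deltaP {k : ℕ} {α : Type*} [DecidableEq α] {R : Type*} [CommRing R]
    (σ : Equiv.Perm (Fin k)) (i j : Fin k → α) : R :=
  ∏ s : Fin k, if i (σ s) = j s then 1 else 0

/-- `Δ_σ(i) = ∏_{s=1}^k δ_{i_{σ(2s-1)}, i_{σ(2s)}}`. -/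
def DeltaO {k : ℕ} {α : Type*} [DecidableEq α] {R : Type*} [CommRing R]
    (σ : Equiv.Perm (Fin (2 * k))) (i : Fin (2 * k) → α) : R :=
  ∏ s : Fin k, if i (σ (lo s)) = i (σ (hi s)) then 1 else 0

/-- The standard skew-symmetric matrix `J_n = ((O, I_n), (−I_n, O))`. -/
def Jmat (R : Type*) [CommRing R] (n : ℕ) : Matrix (Fin (2 * n)) (Fin (2 * n)) R :=
  Matrix.of fun p q =>
    if (p : ℕ) + n = (q : ℕ) then 1 else if (q : ℕ) + n = (p : ℕ) then -1 else 0

/-- `Δ'_σ(i) = ∏_{r=1}^k ⟨i_{σ(2r-1)}, i_{σ(2r)}⟩`, where `⟨p,q⟩` is the `(p,q)` entry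
of `J_n`. -/
def DeltaSp {k n : ℕ} (R : Type*) [CommRing R]
    (σ : Equiv.Perm (Fin (2 * k))) (i : Fin (2 * k) → Fin (2 * n)) : R :=
  ∏ s : Fin k, Jmat R n (i (σ (lo s))) (i (σ (hi s)))

/-- The signature matrix `I'_{a,n-a} = diag(I_a, −I_{n-a})`, of size `n`. -/
def Iab (R : Type*) [CommRing R] (n a : ℕ) : Matrix (Fin n) (Fin n) R :=
  Matrix.of fun p q => if p = q then (if (p : ℕ) < a then 1 else -1) else 0

/-- The signature matrix `I''_{a,n-a} = diag(I_a, −I_{n-a}, I_a, −I_{n-a})`, of size `2n`. -/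
def Ippab (R : Type*) [CommRing R] (n a : ℕ) : Matrix (Fin (2 * n)) (Fin (2 * n)) R :=
  Matrix.of fun p q => if p = q then (if (p : ℕ) % n < a then 1 else -1) else 0

/-- The unitary group `U(n)` of `n × n` complex unitary matrices. -/
abbrev UG (n : ℕ) := Matrix.unitaryGroup (Fin n) ℂ

/-- The real orthogonal group `O(n)`. -/
abbrev OG (n : ℕ) := Matrix.orthogonalGroup (Fin n) ℝ

noncomputable instance (n : ℕ) : MeasurableSpace (UG n) := borel _

noncomputable instance (n : ℕ) : MeasurableSpace (OG n) := borel _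

/-- A `2n × 2n` unitary matrix lies in the compact symplectic group `Sp(2n)`
iff `S J Sᵀ = J`. -/
def IsSymplectic {n : ℕ} (S : UG (2 * n)) : Prop :=
  (S : Matrix (Fin (2 * n)) (Fin (2 * n)) ℂ) * Jmat ℂ n
    * (S : Matrix (Fin (2 * n)) (Fin (2 * n)) ℂ)ᵀ = Jmat ℂ n

/-- The function `T^{D III}_n` on `S_{2k}`:
`σ ↦ ∑_p Δ_σ(p) ∏_{r=1}^k J_{p_{2r-1}, p_{2r}}`. -/
noncomputable def TDIII (n k : ℕ) : Equiv.Perm (Fin (2 * k)) → ℝ :=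
  fun σ => ∑ p : Fin (2 * k) → Fin (2 * n),
    DeltaO σ p * ∏ r : Fin k, Jmat ℝ n (p (lo r)) (p (hi r))

/-- The function `T^{C I}_n` on `S_{2k}`:
`σ ↦ ∑_p Δ'_σ(p) ∏_{r=1}^k (J I'_{nn})_{p_{2r-1}, p_{2r}}`. -/
noncomputable def TCI (n k : ℕ) : Equiv.Perm (Fin (2 * k)) → ℂ :=
  fun σ => ∑ p : Fin (2 * k) → Fin (2 * n),
    DeltaSp ℂ σ p * ∏ r : Fin k, (Jmat ℂ n * Iab ℂ (2 * n) n) (p (lo r)) (p (hi r))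


section

variable {k : ℕ}

/-! ### The standard pairing and the hyperoctahedral group -/

lemma lo_or_hi (x : Fin (2 * k)) : (∃ i : Fin k, x = lo i) ∨ ∃ i : Fin k, x = hi i := by
  have hx := x.isLt
  rcases Nat.even_or_odd' (x : ℕ) with ⟨c, hc | hc⟩
  · exact Or.inl ⟨⟨c, by omega⟩, Fin.ext hc⟩
  · exact Or.inr ⟨⟨c, by omega⟩, Fin.ext hc⟩

lemma lo_inj {i j : Fin k} : lo i = lo j ↔ i = j := by
  simp [lo, Fin.ext_iff]

lemma hi_inj {i j : Fin k} : hi i = hi j ↔ i = j := by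
  simp [hi, Fin.ext_iff]

lemma lo_ne_hi (i j : Fin k) : lo i ≠ hi j := by
  simp only [lo, hi, ne_eq, Fin.ext_iff]; omega

lemma hi_ne_lo (i j : Fin k) : hi i ≠ lo j := (lo_ne_hi j i).symm

/-- The involution exchanging the two points `lo i` and `hi i` of each standard pair. -/
def mu (k : ℕ) : Equiv.Perm (Fin (2 * k)) :=
  Function.Involutive.toPerm
    (fun x => if h : (x : ℕ) % 2 = 0 then ⟨x + 1, by omega⟩ else ⟨x - 1, by omega⟩) (by
      intro x
      apply Fin.ext
      by_cases h : (x : ℕ) % 2 = 0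
      · have h' : ¬ (((x : ℕ) + 1) % 2 = 0) := by omega
        simp [h, h']
      · have h' : ((x : ℕ) - 1) % 2 = 0 := by omega
        simp only [h, h', dite_true, dite_false]
        omega)

@[simp] lemma mu_lo (i : Fin k) : mu k (lo i) = hi i := by
  have h : ((lo i : Fin (2 * k)) : ℕ) % 2 = 0 := by simp [lo]
  exact (dif_pos h).trans rfl

@[simp] lemma mu_hi (i : Fin k) : mu k (hi i) = lo i := by
  have h : ¬ ((hi i : Fin (2 * k)) : ℕ) % 2 = 0 := by simp only [hi]; omega
  exact (dif_neg h).trans rfl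

@[simp] lemma mu_mu (x : Fin (2 * k)) : mu k (mu k x) = x := by
  rcases lo_or_hi x with ⟨i, rfl⟩ | ⟨i, rfl⟩ <;> simp

lemma mu_ne (x : Fin (2 * k)) : mu k x ≠ x := by
  rcases lo_or_hi x with ⟨i, rfl⟩ | ⟨i, rfl⟩
  · simpa using hi_ne_lo i i
  · simpa using lo_ne_hi i i

/-- The fixed-point-free involution attached to the pairing `{σ (lo r), σ (hi r)}`. -/
def partner (σ : Equiv.Perm (Fin (2 * k))) : Equiv.Perm (Fin (2 * k)) := σ * mu k * σ⁻¹

lemma partner_apply (σ : Equiv.Perm (Fin (2 * k))) (x : Fin (2 * k)) :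
    partner σ x = σ (mu k (σ⁻¹ x)) := rfl

@[simp] lemma partner_partner (σ : Equiv.Perm (Fin (2 * k))) (x : Fin (2 * k)) :
    partner σ (partner σ x) = x := by
  simp [partner_apply]

lemma partner_ne (σ : Equiv.Perm (Fin (2 * k))) (x : Fin (2 * k)) : partner σ x ≠ x := by
  intro h
  apply mu_ne (σ⁻¹ x)
  rw [partner_apply] at h
  rw [Equiv.Perm.eq_inv_iff_eq, h]

lemma partner_mul (τ σ : Equiv.Perm (Fin (2 * k))) :
    partner (τ * σ) = τ * partner σ * τ⁻¹ := by
  simp [partner, mul_assoc]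

lemma isHyper_iff_comm (ζ : Equiv.Perm (Fin (2 * k))) :
    IsHyper ζ ↔ ∀ x, ζ (mu k x) = mu k (ζ x) := by
  constructor
  · intro h x
    have key : ∀ i : Fin k, ζ (hi i) = mu k (ζ (lo i)) := by
      intro i
      obtain ⟨j, hj⟩ := h i
      have h1 : ζ (lo i) ∈ ({lo j, hi j} : Finset (Fin (2 * k))) := by rw [← hj]; simp
      have h2 : ζ (hi i) ∈ ({lo j, hi j} : Finset (Fin (2 * k))) := by rw [← hj]; simp
      have h3 : ζ (lo i) ≠ ζ (hi i) := fun e => lo_ne_hi i i (ζ.injective e)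
      simp only [Finset.mem_insert, Finset.mem_singleton] at h1 h2
      rcases h1 with h1 | h1 <;> rcases h2 with h2 | h2 <;> simp_all
    rcases lo_or_hi x with ⟨i, rfl⟩ | ⟨i, rfl⟩
    · simpa using key i
    · simp [key i]
  · intro h i
    have h1 := h (lo i)
    rw [mu_lo] at h1
    rcases lo_or_hi (ζ (lo i)) with ⟨j, hj⟩ | ⟨j, hj⟩
    · exact ⟨j, by rw [h1, hj, mu_lo]⟩
    · exact ⟨j, by rw [h1, hj, mu_hi, Finset.pair_comm]⟩

lemma isHyper_iff_partner (ζ : Equiv.Perm (Fin (2 * k))) : IsHyper ζ ↔ partner ζ = mu k := by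
  rw [isHyper_iff_comm, partner, mul_inv_eq_iff_eq_mul, Equiv.ext_iff]
  rfl

lemma IsHyper.mul {ζ η : Equiv.Perm (Fin (2 * k))} (h : IsHyper ζ) (h' : IsHyper η) :
    IsHyper (ζ * η) := by
  rw [isHyper_iff_comm] at *
  intro x
  simp [h', h]

lemma IsHyper.inv {ζ : Equiv.Perm (Fin (2 * k))} (h : IsHyper ζ) : IsHyper ζ⁻¹ := by
  rw [isHyper_iff_comm] at *
  intro x
  rw [Equiv.Perm.inv_eq_iff_eq, h]
  simp

lemma isHyper_one : IsHyper (1 : Equiv.Perm (Fin (2 * k))) := by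
  rw [isHyper_iff_comm]; simp

lemma IsHyper.partner_mul_right {ζ : Equiv.Perm (Fin (2 * k))} (h : IsHyper ζ)
    (σ : Equiv.Perm (Fin (2 * k))) : partner (σ * ζ) = partner σ := by
  rw [partner_mul, (isHyper_iff_partner ζ).1 h, partner]

/-- The transposition `(lo i, hi i)`. -/
def flip (i : Fin k) : Equiv.Perm (Fin (2 * k)) := Equiv.swap (lo i) (hi i)

lemma isHyper_flip (i : Fin k) : IsHyper (flip i) := by
  intro j
  refine ⟨j, ?_⟩
  by_cases h : j = i
  · subst h
    simp [flip, Finset.pair_comm]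
  · rw [flip, Equiv.swap_apply_of_ne_of_ne, Equiv.swap_apply_of_ne_of_ne] <;>
      simp [lo_inj, hi_inj, lo_ne_hi, hi_ne_lo, h]

/-! ### Counting cycles and components by two-colourings -/

/-- If a family of two-colourings is stable under recolouring a set `χ` that contains `a` but not
`b`, then exactly half of the family gives `a` and `b` the same colour. -/
lemma card_halve {X : Type*} [Fintype X] (Q : (X → Bool) → Prop) (a b : X) (χ : X → Bool)
    (ha : χ a = true) (hb : χ b = false) (hQ : ∀ p, Q p → Q (fun x => xor (p x) (χ x))) :
    Nat.card {p // Q p} = 2 * Nat.card {p // Q p ∧ p a = p b} := by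
  classical
  have hinv : ∀ p : X → Bool, (fun x => xor (xor (p x) (χ x)) (χ x)) = p := by
    intro p; funext x; simp
  have e : {p // Q p ∧ p a = p b} ≃ {p // Q p ∧ ¬ p a = p b} :=
    { toFun := fun p => ⟨fun x => xor (p.1 x) (χ x), hQ _ p.2.1, by
        have := p.2.2; simp [ha, hb, this]⟩
      invFun := fun p => ⟨fun x => xor (p.1 x) (χ x), hQ _ p.2.1, by
        have := p.2.2
        cases h1 : p.1 a <;> cases h2 : p.1 b <;> simp_all⟩
      left_inv := fun p => Subtype.ext (hinv p.1)
      right_inv := fun p => Subtype.ext (hinv p.1) }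
  have h1 := Finset.card_filter_add_card_filter_not
    (s := Finset.univ.filter Q) (fun p : X → Bool => p a = p b)
  have h2 := Nat.card_congr e
  simp only [Nat.card_eq_fintype_card, Fintype.card_subtype] at h2 ⊢
  simp only [Finset.filter_filter] at h1
  rw [← h1, two_mul]
  convert congrArg _ h2.symm

lemma two_pow_cyc {m : ℕ} (π : Equiv.Perm (Fin m)) :
    2 ^ cyc π = Nat.card {p : Fin m → Bool // ∀ x, p (π x) = p x} := by
  classical
  -- invariant colourings are the colourings of the set of orbits
  have e : {p : Fin m → Bool // ∀ x, p (π x) = p x} ≃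
      (Quotient (Equiv.Perm.SameCycle.setoid π) → Bool) :=
    { toFun := fun p => Quotient.lift p.1 (by
        rintro a b ⟨i, rfl⟩
        have hz : ∀ i : ℤ, p.1 ((π ^ i) a) = p.1 a := by
          intro i
          induction i using Int.induction_on with
          | zero => simp
          | succ i ih => rw [add_comm, _root_.zpow_add, Equiv.Perm.mul_apply, zpow_one, p.2, ih]
          | pred i ih =>
            rw [← ih, ← p.2 ((π ^ (-(i : ℤ) - 1)) a), ← Equiv.Perm.mul_apply, ← _root_.zpow_one_add,
              show (1 : ℤ) + (-(i : ℤ) - 1) = -i by ring]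
        exact (hz i).symm)
      invFun := fun q => ⟨fun x => q (Quotient.mk _ x), fun x => by
        have h : (Quotient.mk (Equiv.Perm.SameCycle.setoid π) (π x)) = Quotient.mk _ x :=
          Quotient.sound ⟨-1, by simp⟩
        exact congrArg q h⟩
      left_inv := fun p => rfl
      right_inv := fun q => by
        funext x
        induction x using Quotient.inductionOn
        rfl }
  rw [Nat.card_congr e, Nat.card_fun, Nat.card_eq_fintype_card, Fintype.card_bool]
  congr 1
  -- an orbit is either the support of a cycle factor or a fixed point
  let T := {c // c ∈ π.cycleFactorsFinset} ⊕ {x // π x = x}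
  have hT : Nat.card T = cyc π := by
    rw [Nat.card_sum, cyc, Equiv.Perm.cycleType_def, Multiset.card_map]
    simp only [Nat.card_eq_fintype_card, Fintype.card_coe]
    rw [Fintype.card_subtype]
    rfl
  let F : Fin m → T := fun x =>
    if h : π x = x then Sum.inr ⟨x, h⟩
    else Sum.inl ⟨π.cycleOf x, Equiv.Perm.cycleOf_mem_cycleFactorsFinset_iff.2
      (Equiv.Perm.mem_support.2 h)⟩
  have hF : ∀ x y, F x = F y ↔ π.SameCycle x y := by
    intro x y
    by_cases hx : π x = x
    · by_cases hy : π y = y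
      · simp only [F, hx, hy, dite_true]
        constructor
        · intro h; cases h; exact Equiv.Perm.SameCycle.refl _ _
        · rintro ⟨i, hi⟩
          rw [Equiv.Perm.zpow_apply_eq_self_of_apply_eq_self hx] at hi
          subst hi; rfl
      · simp only [F, hx, hy, dite_true, dite_false, reduceCtorEq, false_iff]
        exact fun h => hy (h.apply_eq_self_iff.1 hx)
    · by_cases hy : π y = y
      · simp only [F, hx, hy, dite_true, dite_false, reduceCtorEq, false_iff]
        exact fun h => hx (h.apply_eq_self_iff.2 hy)
      · simp only [F, hx, hy, dite_false]
        refine Iff.trans ⟨fun h => congrArg Subtype.val (Sum.inl.inj h), fun h => ?_⟩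
          (Equiv.Perm.sameCycle_iff_cycleOf_eq_of_mem_support
          (Equiv.Perm.mem_support.2 hx) (Equiv.Perm.mem_support.2 hy)).symm
        exact congrArg Sum.inl (Subtype.ext h)
  have hFs : Function.Surjective F := by
    rintro (⟨c, hc⟩ | ⟨x, hx⟩)
    · obtain ⟨x, hx⟩ := (Equiv.Perm.mem_cycleFactorsFinset_iff.1 hc).1.nonempty_support
      refine ⟨x, ?_⟩
      have h1 := Equiv.Perm.cycle_is_cycleOf hx hc
      have hx' : π x ≠ x := Equiv.Perm.mem_support.1
        (Equiv.Perm.mem_cycleFactorsFinset_support_le hc hx)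
      simp only [F, hx', dite_false]
      congr 1
      exact Subtype.ext h1.symm
    · exact ⟨x, by simp only [F, hx, dite_true]⟩
  rw [← hT]
  symm
  refine Nat.card_congr (Equiv.ofBijective
    (Quotient.lift F fun a b h => (hF a b).2 h) ⟨?_, ?_⟩)
  · intro a b
    induction a using Quotient.inductionOn
    induction b using Quotient.inductionOn
    intro h
    exact Quotient.sound ((hF _ _).1 h)
  · intro t
    obtain ⟨x, hx⟩ := hFs t
    exact ⟨Quotient.mk _ x, hx⟩

lemma two_pow_ccount (σ : Equiv.Perm (Fin (2 * k))) :
    2 ^ ccount σ = Nat.card {p : Fin (2 * k) → Bool //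
      (∀ x, p (mu k x) = p x) ∧ ∀ x, p (partner σ x) = p x} := by
  classical
  have hadj : ∀ p : Fin (2 * k) → Bool, (∀ a b, (Gamma σ).Adj a b → p a = p b) ↔
      (∀ x, p (mu k x) = p x) ∧ ∀ x, p (partner σ x) = p x := by
    intro p
    constructor
    · intro h
      have h1 : ∀ i : Fin k, p (lo i) = p (hi i) := fun i =>
        h _ _ ⟨lo_ne_hi i i, Or.inl (Or.inl ⟨i, rfl, rfl⟩)⟩
      have h2 : ∀ i : Fin k, p (σ (lo i)) = p (σ (hi i)) := fun i =>
        h _ _ ⟨fun e => lo_ne_hi i i (σ.injective e), Or.inl (Or.inr ⟨i, rfl, rfl⟩)⟩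
      constructor
      · intro x
        rcases lo_or_hi x with ⟨i, rfl⟩ | ⟨i, rfl⟩ <;> simp [h1]
      · intro x
        obtain ⟨y, rfl⟩ := σ.surjective x
        rcases lo_or_hi y with ⟨i, rfl⟩ | ⟨i, rfl⟩ <;> simp [partner_apply, h2]
    · rintro ⟨h1, h2⟩ a b hab
      have h1' : ∀ i : Fin k, p (hi i) = p (lo i) := fun i => by simpa using h1 (lo i)
      have h2' : ∀ i : Fin k, p (σ (hi i)) = p (σ (lo i)) := fun i => by
        simpa [partner_apply] using h2 (σ (lo i))
      rcases hab.2 with (⟨r, rfl, rfl⟩ | ⟨r, rfl, rfl⟩) | (⟨r, rfl, rfl⟩ | ⟨r, rfl, rfl⟩) <;>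
        simp [h1', h2']
  have e : {p : Fin (2 * k) → Bool // ∀ a b, (Gamma σ).Adj a b → p a = p b} ≃
      ((Gamma σ).ConnectedComponent → Bool) :=
    { toFun := fun p => SimpleGraph.ConnectedComponent.lift p.1 (by
        intro a b w _
        induction w with
        | nil => rfl
        | cons h w ih => exact (p.2 _ _ h).trans (ih (by simp_all)))
      invFun := fun q => ⟨fun x => q ((Gamma σ).connectedComponentMk x), fun a b h => by
        exact congrArg q (SimpleGraph.ConnectedComponent.sound h.reachable)⟩
      left_inv := fun p => rfl
      right_inv := fun q => by
        funext x
        induction x using SimpleGraph.ConnectedComponent.ind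
        rfl }
  rw [← Nat.card_congr (Equiv.subtypeEquivRight hadj), Nat.card_congr e, Nat.card_fun,
    Nat.card_eq_fintype_card (α := Bool), Fintype.card_bool, ccount]

lemma ccount_congr {σ τ : Equiv.Perm (Fin (2 * k))} (h : partner σ = partner τ) :
    ccount σ = ccount τ := by
  apply Nat.pow_right_injective le_rfl
  simp only [two_pow_ccount, h]

lemma ccount_mul_right {ζ : Equiv.Perm (Fin (2 * k))} (h : IsHyper ζ)
    (σ : Equiv.Perm (Fin (2 * k))) : ccount (σ * ζ) = ccount σ :=
  ccount_congr (h.partner_mul_right σ)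

lemma ccount_mul_left {ζ : Equiv.Perm (Fin (2 * k))} (h : IsHyper ζ)
    (σ : Equiv.Perm (Fin (2 * k))) : ccount (ζ * σ) = ccount σ := by
  apply Nat.pow_right_injective le_rfl
  simp only [two_pow_ccount]
  have hc := (isHyper_iff_comm ζ).1 h
  refine Nat.card_congr ((ζ.arrowCongr (Equiv.refl Bool)).symm.subtypeEquiv fun p => ?_)
  simp only [Equiv.arrowCongr_symm, Equiv.arrowCongr_apply, Equiv.symm_symm, Equiv.refl_symm,
    Equiv.coe_refl, Function.comp_apply, id_eq, hc, partner_mul, Equiv.Perm.mul_apply]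
  constructor
  · rintro ⟨h1, h2⟩
    exact ⟨fun x => h1 _, fun x => by simpa using h2 (ζ x)⟩
  · rintro ⟨h1, h2⟩
    exact ⟨fun x => by simpa using h1 (ζ⁻¹ x), fun x => by simpa using h2 (ζ⁻¹ x)⟩

lemma ccount_of_isHyper {ζ : Equiv.Perm (Fin (2 * k))} (h : IsHyper ζ) : ccount ζ = k := by
  apply Nat.pow_right_injective le_rfl
  simp only [two_pow_ccount, (isHyper_iff_partner ζ).1 h, and_self]
  have e : {p : Fin (2 * k) → Bool // ∀ x, p (mu k x) = p x} ≃ (Fin k → Bool) :=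
    { toFun := fun p i => p.1 (lo i)
      invFun := fun q => ⟨fun x => q ⟨(x : ℕ) / 2, by omega⟩, fun x => by
        refine congrArg q (Fin.ext ?_)
        rcases lo_or_hi x with ⟨i, rfl⟩ | ⟨i, rfl⟩
        · rw [mu_lo]; simp only [lo, hi]; omega
        · rw [mu_hi]; simp only [lo, hi]; omega⟩
      left_inv := fun p => by
        apply Subtype.ext
        funext x
        rcases lo_or_hi x with ⟨i, rfl⟩ | ⟨i, rfl⟩
        · simp [lo]
        · have hi' := p.2 (lo i)
          rw [mu_lo] at hi'
          rw [hi']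
          refine congrArg p.1 (Fin.ext ?_)
          simp only [lo, hi]
          omega
      right_inv := fun q => by
        funext i
        simp [lo] }
  rw [Nat.card_congr e, Nat.card_fun]
  simp

/-- Inserting a fixed point `a` of `π` into the cycle of another point `b` merges two cycles. -/
lemma cyc_swap_mul {m : ℕ} {π : Equiv.Perm (Fin m)} {a b : Fin m} (ha : π a = a) (hab : b ≠ a) :
    cyc π = cyc (Equiv.swap a b * π) + 1 := by
  classical
  apply Nat.pow_right_injective le_rfl
  simp only [pow_succ, two_pow_cyc]
  rw [card_halve _ a b (fun x => decide (x = a)) (by simp) (by simpa using hab), mul_comm]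
  · congr 1
    refine Nat.card_congr (Equiv.subtypeEquivRight fun p => ?_)
    have hs : p a = p b → ∀ x, p (Equiv.swap a b x) = p x := by
      intro h x
      rw [Equiv.swap_apply_def]
      split_ifs with h1 h2
      · rw [h1, h]
      · rw [h2, h]
      · rfl
    constructor
    · rintro ⟨h1, h2⟩ x
      rw [Equiv.Perm.mul_apply, hs h2, h1]
    · intro h
      have h2 : p a = p b := by
        have := h a
        rw [Equiv.Perm.mul_apply, ha, Equiv.swap_apply_left] at this
        exact this.symm
      refine ⟨fun x => ?_, h2⟩
      rw [← hs h2, ← Equiv.Perm.mul_apply, h]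
  · intro p hp x
    have : π x = a ↔ x = a := by
      constructor
      · intro h; exact π.injective (h.trans ha.symm)
      · rintro rfl; exact ha
    simp [hp, this]

/-- If `{lo r, hi r}` is a pair of `σ`, then re-pairing `hi r` with another point `b` outside the
pair merges two components of `Γ(σ)`. -/
lemma ccount_swap_mul {σ : Equiv.Perm (Fin (2 * k))} {r : Fin k} {b : Fin (2 * k)}
    (hr : partner σ (hi r) = lo r) (hb : b ≠ lo r) (hb' : b ≠ hi r) :
    ccount σ = ccount (Equiv.swap (lo r) b * σ) + 1 := by
  classical
  have hr' : partner σ (lo r) = hi r := by rw [← hr, partner_partner]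
  apply Nat.pow_right_injective le_rfl
  simp only [pow_succ, two_pow_ccount]
  rw [card_halve _ (lo r) b (fun x => decide (x = lo r ∨ x = hi r)) (by simp)
    (by simp [hb, hb']), mul_comm]
  · congr 1
    refine Nat.card_congr (Equiv.subtypeEquivRight fun p => ?_)
    have hs : p (lo r) = p b → ∀ x, p (Equiv.swap (lo r) b x) = p x := by
      intro h x
      rw [Equiv.swap_apply_def]
      split_ifs with h1 h2
      · rw [h1, h]
      · rw [h2, h]
      · rfl
    rw [partner_mul, Equiv.swap_inv]
    simp only [Equiv.Perm.mul_apply]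
    constructor
    · rintro ⟨⟨h0, h1⟩, h2⟩
      exact ⟨h0, fun x => by rw [hs h2, h1, hs h2]⟩
    · rintro ⟨h0, h⟩
      have h2 : p (lo r) = p b := by
        have h3 := h (hi r)
        rw [Equiv.swap_apply_of_ne_of_ne (hi_ne_lo r r) hb'.symm, hr,
          Equiv.swap_apply_left] at h3
        have h4 := h0 (lo r)
        rw [mu_lo] at h4
        rw [h3, h4]
      refine ⟨⟨h0, fun x => ?_⟩, h2⟩
      have h3 := h (Equiv.swap (lo r) b x)
      rwa [hs h2, Equiv.swap_apply_self, hs h2] at h3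
  · rintro p ⟨h0, h1⟩
    have e1 : ∀ x, (mu k x = lo r ∨ mu k x = hi r) ↔ (x = lo r ∨ x = hi r) := by
      intro x
      rw [← (mu k).injective.eq_iff (a := x), ← (mu k).injective.eq_iff (a := x), mu_lo, mu_hi,
        or_comm]
    have e2 : ∀ x, (partner σ x = lo r ∨ partner σ x = hi r) ↔ (x = lo r ∨ x = hi r) := by
      intro x
      rw [← (partner σ).injective.eq_iff (a := x), ← (partner σ).injective.eq_iff (a := x), hr,
        hr', or_comm]
    exact ⟨fun x => by simp only [h0, e1], fun x => by simp only [h1, e2]⟩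

/-! ### The group algebra of `S_{2k}` and its Jucys–Murphy elements -/

/-- The group algebra of `S_{2k}`. -/
abbrev GA (k : ℕ) := MonoidAlgebra ℂ (Equiv.Perm (Fin (2 * k)))

/-- A permutation viewed as an element of the group algebra. -/
noncomputable def el (σ : Equiv.Perm (Fin (2 * k))) : GA k := MonoidAlgebra.of ℂ _ σ

lemma el_mul (σ τ : Equiv.Perm (Fin (2 * k))) : el σ * el τ = el (σ * τ) :=
  (map_mul (MonoidAlgebra.of ℂ _) σ τ).symm

lemma el_one : el (1 : Equiv.Perm (Fin (2 * k))) = 1 :=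
  map_one (MonoidAlgebra.of ℂ _)

/-- The element `∑ f(σ) σ` of the group algebra; full convolution becomes multiplication. -/
noncomputable def toGA (f : Equiv.Perm (Fin (2 * k)) → ℂ) : GA k := ∑ σ, f σ • el σ

lemma toGA_injective : Function.Injective (toGA (k := k)) := by
  intro f g h
  have key : ∀ (f : Equiv.Perm (Fin (2 * k)) → ℂ) (σ), (toGA f).coeff σ = f σ := by
    intro f σ
    simp [toGA, el, MonoidAlgebra.of, Finsupp.single_apply]
  funext σ
  rw [← key f, ← key g, h]

lemma toGA_conv (f g : Equiv.Perm (Fin (2 * k)) → ℂ) : toGA (conv f g) = toGA f * toGA g := by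
  simp only [toGA, conv, Finset.sum_mul_sum, Finset.sum_smul]
  rw [Finset.sum_comm]
  refine Finset.sum_congr rfl fun τ _ => ?_
  refine Fintype.sum_equiv (Equiv.mulLeft τ⁻¹) _ _ fun σ => ?_
  simp [el_mul, smul_smul, mul_comm]

lemma toGA_smul (c : ℂ) (f : Equiv.Perm (Fin (2 * k)) → ℂ) :
    toGA (fun σ => c * f σ) = c • toGA f := by
  simp only [toGA, Finset.smul_sum, mul_smul]

lemma toGA_deltaId : toGA (k := k) deltaId = 1 := by
  rw [toGA, Finset.sum_eq_single 1]
  · simp [deltaId, el_one]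
  · intro σ _ h; simp [deltaId, h]
  · simp

/-- The Jucys–Murphy element `∑_{j < m} (m j)`. -/
noncomputable def jm (m : Fin (2 * k)) : GA k := ∑ j ∈ Finset.Iio m, el (Equiv.swap m j)

/-- The shifted Jucys–Murphy element `x + ∑_{j < m} (m j)`. -/
noncomputable def sjm (x : ℂ) (m : Fin (2 * k)) : GA k := x • 1 + jm m

lemma jm_commute_el {m : Fin (2 * k)} {σ : Equiv.Perm (Fin (2 * k))}
    (hσ : ∀ i, m ≤ i → σ i = i) : Commute (jm m) (el σ) := by
  rw [Commute, SemiconjBy, jm, Finset.sum_mul, Finset.mul_sum]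
  symm
  refine Finset.sum_equiv σ ?_ ?_
  · intro j
    simp only [Finset.mem_Iio]
    constructor
    · intro h
      by_contra h'
      have h1 := σ.injective (hσ _ (not_lt.1 h'))
      exact h' (by rwa [h1])
    · intro h
      by_contra h'
      rw [hσ _ (not_lt.1 h')] at h
      exact h' h
  · intro j _
    rw [el_mul, el_mul, Equiv.mul_swap_eq_swap_mul, hσ m le_rfl]

lemma jm_commute_of_lt {m m' : Fin (2 * k)} (h : m' < m) : Commute (jm m) (jm m') := by
  rw [jm.eq_1 m']
  refine Commute.sum_right _ _ _ fun j hj => jm_commute_el fun i hi => ?_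
  rw [Finset.mem_Iio] at hj
  exact Equiv.swap_apply_of_ne_of_ne (h.trans_le hi).ne' ((hj.trans h).trans_le hi).ne'

lemma jm_commute (m m' : Fin (2 * k)) : Commute (jm m) (jm m') := by
  rcases lt_trichotomy m m' with h | rfl | h
  · exact (jm_commute_of_lt h).symm
  · exact Commute.refl _
  · exact jm_commute_of_lt h

lemma sjm_commute (x y : ℂ) (m m' : Fin (2 * k)) : Commute (sjm x m) (sjm y m') :=
  (((Commute.one_left _).smul_left x)).add_left
    (((Commute.one_right _).smul_right y).add_right (jm_commute m m'))

lemma flip_commute_sjm (x : ℂ) {r : Fin k} {m : Fin (2 * k)} (h : m < lo r) :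
    Commute (el (flip r)) (sjm x m) := by
  refine ((Commute.one_right _).smul_right x).add_right ?_
  refine Commute.sum_right _ _ _ fun j hj => ?_
  rw [Finset.mem_Iio] at hj
  have hlt : lo r < hi r := by simp [lo, hi, Fin.lt_def]
  have hfix : ∀ i, i < lo r → flip r i = i := fun i hi =>
    Equiv.swap_apply_of_ne_of_ne hi.ne (hi.trans hlt).ne
  rw [Commute, SemiconjBy, el_mul, el_mul, Equiv.mul_swap_eq_swap_mul, hfix m h,
    hfix j (hj.trans h)]

lemma sjm_hi_mul_flip (x : ℂ) (r : Fin k) :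
    sjm x (hi r) * el (flip r) = x • el (flip r) + (el (flip r) * jm (lo r) + 1) := by
  have hI : Finset.Iio (hi r) = insert (lo r) (Finset.Iio (lo r)) := by
    ext j; simp only [Finset.mem_Iio, Finset.mem_insert, Fin.lt_def, Fin.ext_iff, lo, hi]; omega
  have hlt : lo r < hi r := by simp [lo, hi, Fin.lt_def]
  rw [sjm, add_mul, smul_mul_assoc, one_mul, jm.eq_1 (hi r), hI,
    Finset.sum_insert (by simp), add_mul, el_mul, flip, Equiv.swap_comm (hi r) (lo r),
    Equiv.swap_mul_self, el_one, add_comm (1 : GA k), jm, Finset.mul_sum, Finset.sum_mul]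
  congr 2
  refine Finset.sum_congr rfl fun j hj => ?_
  rw [Finset.mem_Iio] at hj
  rw [el_mul, el_mul, Equiv.mul_swap_eq_swap_mul (Equiv.swap (lo r) (hi r)),
    Equiv.swap_apply_left, Equiv.swap_apply_of_ne_of_ne hj.ne (hj.trans hlt).ne]

/-- The product of the first `r` shifted Jucys–Murphy elements at the points `lo i`. -/
noncomputable def sjmProd (x : ℂ) : ℕ → GA k
  | 0 => 1
  | r + 1 => (if h : r < k then sjm x (lo ⟨r, h⟩) else 1) * sjmProd x r

lemma sjmProd_succ (x : ℂ) (r : Fin k) :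
    sjmProd x ((r : ℕ) + 1) = sjm x (lo r) * sjmProd x r := by
  simp [sjmProd]

lemma sjm_commute_sjmProd (x y : ℂ) (m : Fin (2 * k)) (r : ℕ) :
    Commute (sjm x m) (sjmProd y r) := by
  induction r with
  | zero => exact Commute.one_right _
  | succ r ih =>
    rw [sjmProd]
    refine Commute.mul_right ?_ ih
    split_ifs
    · exact sjm_commute _ _ _ _
    · exact Commute.one_right _

lemma sjmProd_commute (x y : ℂ) (r s : ℕ) :
    Commute (sjmProd (k := k) x r) (sjmProd y s) := by
  induction r with
  | zero => exact Commute.one_left _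
  | succ r ih =>
    rw [sjmProd]
    refine Commute.mul_left ?_ ih
    split_ifs
    · exact sjm_commute_sjmProd _ _ _ _
    · exact Commute.one_left _

lemma flip_commute_sjmProd (x : ℂ) (s : Fin k) (r : ℕ) (hr : r ≤ s) :
    Commute (el (flip s)) (sjmProd x r) := by
  induction r with
  | zero => exact Commute.one_right _
  | succ r ih =>
    rw [sjmProd]
    refine Commute.mul_right ?_ (ih (by omega))
    split_ifs
    · apply flip_commute_sjm
      simp only [lo, Fin.lt_def]; omega
    · exact Commute.one_right _

/-! ### Factorisation of the cycle and component generating functions -/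

open scoped Classical in
/-- The permutations fixing every point `≥ m`. -/
noncomputable def fixSet (k m : ℕ) : Finset (Equiv.Perm (Fin (2 * k))) :=
  Finset.univ.filter fun π => ∀ i : Fin (2 * k), m ≤ i → π i = i

open scoped Classical in
/-- The permutations whose pairing contains every standard pair `{lo s, hi s}` with `s ≥ r`. -/
noncomputable def pairSet (k r : ℕ) : Finset (Equiv.Perm (Fin (2 * k))) :=
  Finset.univ.filter fun σ => ∀ s : Fin k, r ≤ s → partner σ (hi s) = lo s

lemma mem_fixSet {m : ℕ} {π : Equiv.Perm (Fin (2 * k))} :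
    π ∈ fixSet k m ↔ ∀ i : Fin (2 * k), m ≤ i → π i = i := by
  simp [fixSet]

lemma mem_pairSet {r : ℕ} {σ : Equiv.Perm (Fin (2 * k))} :
    σ ∈ pairSet k r ↔ ∀ s : Fin k, r ≤ s → partner σ (hi s) = lo s := by
  simp [pairSet]

lemma mem_pairSet_zero {σ : Equiv.Perm (Fin (2 * k))} : σ ∈ pairSet k 0 ↔ IsHyper σ := by
  rw [mem_pairSet, isHyper_iff_partner, Equiv.ext_iff]
  constructor
  · intro h x
    rcases lo_or_hi x with ⟨i, rfl⟩ | ⟨i, rfl⟩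
    · rw [← h i (Nat.zero_le _), partner_partner, h i (Nat.zero_le _), mu_lo]
    · rw [h i (Nat.zero_le _), mu_hi]
  · intro h s _
    rw [h, mu_hi]

/-- Every permutation fixing the points `> m` is uniquely `(m j) π'` with `j ≤ m` and `π'` fixing
the points `≥ m`. -/
lemma sum_fixSet_succ {M : Type*} [AddCommMonoid M] (f : Equiv.Perm (Fin (2 * k)) → M)
    (m : Fin (2 * k)) :
    ∑ π ∈ fixSet k ((m : ℕ) + 1), f π =
      ∑ q ∈ fixSet k m ×ˢ Finset.Iic m, f (Equiv.swap m q.2 * q.1) := by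
  refine Finset.sum_nbij' (fun π => (Equiv.swap m (π m) * π, π m))
    (fun q => Equiv.swap m q.2 * q.1) ?_ ?_ ?_ ?_ ?_
  · intro π hπ
    rw [mem_fixSet] at hπ
    have hne : ∀ i, m < i → π m ≠ i := by
      intro i hi e
      have h1 := hπ i hi
      rw [← h1] at e
      exact hi.ne (π.injective e)
    rw [Finset.mem_product, mem_fixSet, Finset.mem_Iic]
    refine ⟨fun i hi => ?_, ?_⟩
    · rcases eq_or_lt_of_le (show m ≤ i from hi) with rfl | hlt
      · simp
      · dsimp only
        rw [Equiv.Perm.mul_apply, hπ i hlt, Equiv.swap_apply_of_ne_of_ne hlt.ne' (hne i hlt).symm]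
    · by_contra h
      exact hne _ (not_le.1 h) rfl
  · rintro ⟨π, j⟩ hq
    rw [Finset.mem_product, mem_fixSet, Finset.mem_Iic] at hq
    rw [mem_fixSet]
    intro i hi
    have hlt : m < i := hi
    dsimp only at hq ⊢
    rw [Equiv.Perm.mul_apply, hq.1 i hlt.le, Equiv.swap_apply_of_ne_of_ne hlt.ne'
      (hq.2.trans_lt hlt).ne']
  · intro π _
    simp
  · rintro ⟨π, j⟩ hq
    rw [Finset.mem_product, mem_fixSet] at hq
    have h := hq.1 m le_rfl
    dsimp only at h
    simp [h]
  · intro π _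
    simp

/-- Re-pairing `hi r`: every permutation whose pairing contains the standard pairs beyond `r` is
uniquely `(lo r, j) σ'` with `j ≤ lo r` and the pairing of `σ'` also containing the `r`-th pair. -/
lemma sum_pairSet_succ {M : Type*} [AddCommMonoid M] (f : Equiv.Perm (Fin (2 * k)) → M)
    (r : Fin k) :
    ∑ σ ∈ pairSet k ((r : ℕ) + 1), f σ =
      ∑ q ∈ pairSet k r ×ˢ Finset.Iic (lo r), f (Equiv.swap (lo r) q.2 * q.1) := by
  refine Finset.sum_nbij' (fun σ => (Equiv.swap (lo r) (partner σ (hi r)) * σ, partner σ (hi r)))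
    (fun q => Equiv.swap (lo r) q.2 * q.1) ?_ ?_ ?_ ?_ ?_
  · intro σ hσ
    rw [mem_pairSet] at hσ
    have hσ' : ∀ s : Fin k, (r : ℕ) + 1 ≤ s → partner σ (lo s) = hi s := by
      intro s hs
      rw [← hσ s hs, partner_partner]
    have hne : ∀ s : Fin k, (r : ℕ) + 1 ≤ s → partner σ (hi r) ≠ lo s := by
      intro s hs e
      rw [← hσ s hs, (partner σ).injective.eq_iff, hi_inj] at e
      subst e; omega
    have hne' : ∀ s : Fin k, (r : ℕ) + 1 ≤ s → partner σ (hi r) ≠ hi s := by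
      intro s hs e
      rw [← hσ' s hs, (partner σ).injective.eq_iff] at e
      exact hi_ne_lo _ _ e
    rw [Finset.mem_product, mem_pairSet, Finset.mem_Iic]
    refine ⟨fun s hs => ?_, ?_⟩
    · dsimp only
      rw [partner_mul, Equiv.swap_inv, Equiv.Perm.mul_apply, Equiv.Perm.mul_apply]
      rcases eq_or_lt_of_le (show r ≤ s from hs) with rfl | hlt
      · rw [Equiv.swap_apply_of_ne_of_ne (hi_ne_lo _ _) (partner_ne _ _).symm,
          Equiv.swap_apply_right]
      · rw [Equiv.swap_apply_of_ne_of_ne (hi_ne_lo _ _) (hne' s hlt).symm, hσ s hlt,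
          Equiv.swap_apply_of_ne_of_ne _ (hne s hlt).symm]
        rw [ne_eq, lo_inj]; exact hlt.ne'
    · dsimp only
      rcases lo_or_hi (partner σ (hi r)) with ⟨i, hi'⟩ | ⟨i, hi'⟩
      · rw [hi']
        by_contra h
        refine hne i ?_ hi'
        simp only [lo, Fin.le_def] at h
        omega
      · have h1 : ¬ (r : ℕ) + 1 ≤ i := fun h => hne' i h hi'
        have h2 : i ≠ r := by
          rintro rfl; exact partner_ne _ _ hi'
        rw [hi']
        simp only [lo, hi, Fin.le_def, ne_eq, Fin.ext_iff] at h2 ⊢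
        omega
  · rintro ⟨σ, j⟩ hq
    rw [Finset.mem_product, mem_pairSet, Finset.mem_Iic] at hq
    rw [mem_pairSet]
    intro s hs
    dsimp only at hq ⊢
    have h1 : hi s ≠ j := by
      rintro rfl
      have := hq.2
      simp only [lo, hi, Fin.le_def] at this; omega
    have h2 : lo s ≠ j := by
      rintro rfl
      have := hq.2
      simp only [lo, Fin.le_def] at this; omega
    have h3 : lo s ≠ lo r := by
      rw [ne_eq, lo_inj]; rintro rfl; omega
    rw [partner_mul, Equiv.swap_inv, Equiv.Perm.mul_apply, Equiv.Perm.mul_apply,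
      Equiv.swap_apply_of_ne_of_ne (hi_ne_lo _ _) h1, hq.1 s (by omega),
      Equiv.swap_apply_of_ne_of_ne h3 h2]
  · intro σ _
    simp
  · rintro ⟨σ, j⟩ hq
    rw [Finset.mem_product, mem_pairSet, Finset.mem_Iic] at hq
    dsimp only at hq
    have h1 : hi r ≠ j := by
      rintro rfl
      have := hq.2
      simp only [lo, hi, Fin.le_def] at this; omega
    have h : partner (Equiv.swap (lo r) j * σ) (hi r) = j := by
      rw [partner_mul, Equiv.swap_inv, Equiv.Perm.mul_apply, Equiv.Perm.mul_apply,
        Equiv.swap_apply_of_ne_of_ne (hi_ne_lo _ _) h1, hq.1 r le_rfl, Equiv.swap_apply_left]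
    simp [h]
  · intro σ _
    simp

/-- The cycle generating function of the permutations fixing every point `≥ m`. -/
noncomputable def cycSum (k : ℕ) (x : ℂ) (m : ℕ) : GA k := ∑ π ∈ fixSet k m, x ^ cyc π • el π

/-- The component generating function of the permutations in `pairSet k r`. -/
noncomputable def compSum (k : ℕ) (x : ℂ) (r : ℕ) : GA k :=
  ∑ σ ∈ pairSet k r, x ^ ccount σ • el σ

/-- The sum of the elements of `H_k`. -/
noncomputable def hyperSum (k : ℕ) : GA k := ∑ ζ ∈ pairSet k 0, el ζ

lemma Iic_eq_insert (m : Fin (2 * k)) : Finset.Iic m = insert m (Finset.Iio m) := by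
  ext j; simp [le_iff_eq_or_lt]

lemma cycSum_succ (x : ℂ) (m : Fin (2 * k)) :
    x • cycSum k x ((m : ℕ) + 1) = sjm x m * cycSum k x m := by
  rw [cycSum, sum_fixSet_succ, Finset.sum_product, cycSum, Finset.smul_sum, Finset.mul_sum]
  refine Finset.sum_congr rfl fun π hπ => ?_
  rw [Iic_eq_insert, Finset.sum_insert (by simp), sjm, jm, mul_smul_comm, add_mul, smul_add,
    Finset.sum_mul, smul_mul_assoc, one_mul, smul_add, Equiv.swap_self, Finset.smul_sum,
    Finset.smul_sum]
  refine congrArg₂ _ ?_ (Finset.sum_congr rfl fun j hj => ?_)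
  · rw [smul_comm]; rfl
  · rw [el_mul, smul_smul, cyc_swap_mul (mem_fixSet.1 hπ m le_rfl) (Finset.mem_Iio.1 hj).ne,
      pow_succ']

lemma compSum_succ (x : ℂ) (r : Fin k) :
    x • compSum k x ((r : ℕ) + 1) = sjm x (lo r) * compSum k x r := by
  rw [compSum, sum_pairSet_succ, Finset.sum_product, compSum, Finset.smul_sum, Finset.mul_sum]
  refine Finset.sum_congr rfl fun σ hσ => ?_
  rw [Iic_eq_insert, Finset.sum_insert (by simp), sjm, jm, mul_smul_comm, add_mul, smul_add,
    Finset.sum_mul, smul_mul_assoc, one_mul, smul_add, Equiv.swap_self, Finset.smul_sum,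
    Finset.smul_sum]
  refine congrArg₂ _ ?_ (Finset.sum_congr rfl fun j hj => ?_)
  · rw [smul_comm]; rfl
  · have hj' := Finset.mem_Iio.1 hj
    have hlt : lo r < hi r := by simp [lo, hi, Fin.lt_def]
    rw [el_mul, smul_smul, ccount_swap_mul (mem_pairSet.1 hσ r le_rfl) hj'.ne
      (hj'.trans hlt).ne, pow_succ']

lemma cyc_one : cyc (1 : Equiv.Perm (Fin (2 * k))) = 2 * k := by
  simp [cyc]

lemma cycSum_zero (x : ℂ) : cycSum k x 0 = x ^ (2 * k) • 1 := by
  have : fixSet k 0 = {1} := by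
    ext π; simp [mem_fixSet, Equiv.ext_iff]
  rw [cycSum, this, Finset.sum_singleton, cyc_one, el_one]

lemma compSum_zero (x : ℂ) : compSum k x 0 = x ^ k • hyperSum k := by
  rw [compSum, hyperSum, Finset.smul_sum]
  refine Finset.sum_congr rfl fun ζ hζ => ?_
  rw [ccount_of_isHyper (mem_pairSet_zero.1 hζ)]

lemma pow_smul_compSum (x : ℂ) (r : ℕ) (hr : r ≤ k) :
    x ^ r • compSum k x r = x ^ k • (sjmProd x r * hyperSum k) := by
  induction r with
  | zero => simp [compSum_zero, sjmProd]
  | succ r ih =>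
    have h1 := compSum_succ x (⟨r, hr⟩ : Fin k)
    have h2 := sjmProd_succ x (⟨r, hr⟩ : Fin k)
    dsimp only at h1 h2
    rw [pow_succ, mul_smul, h1, ← mul_smul_comm, ih (by omega), h2, mul_smul_comm, mul_assoc]

lemma flip_mul_compSum (x : ℂ) (s : Fin k) (r : ℕ) :
    el (flip s) * compSum k x r = compSum k x r := by
  rw [compSum, Finset.mul_sum]
  have hff : ∀ y, flip s (flip s y) = y := fun y => Equiv.swap_apply_self _ _ _
  have hfm := (isHyper_iff_comm _).1 (isHyper_flip s)
  have hmem : ∀ σ, σ ∈ pairSet k r → flip s * σ ∈ pairSet k r := by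
    intro σ hσ
    rw [mem_pairSet] at *
    intro t ht
    rw [partner_mul, flip, Equiv.swap_inv, ← flip, Equiv.Perm.mul_apply, Equiv.Perm.mul_apply]
    have h1 := hσ t ht
    have h2 : partner σ (lo t) = hi t := by rw [← h1, partner_partner]
    by_cases h : t = s
    · subst h
      have e1 : flip t (hi t) = lo t := Equiv.swap_apply_right _ _
      rw [e1, h2, e1]
    · have e1 : flip s (hi t) = hi t := Equiv.swap_apply_of_ne_of_ne (hi_ne_lo _ _)
        (by rwa [ne_eq, hi_inj])
      have e2 : flip s (lo t) = lo t := Equiv.swap_apply_of_ne_of_ne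
        (by rwa [ne_eq, lo_inj]) (lo_ne_hi _ _)
      rw [e1, h1, e2]
  have hinv : ∀ σ, flip s * (flip s * σ) = σ := by
    intro σ; ext y; simp [hff]
  refine Finset.sum_nbij' (fun σ => flip s * σ) (fun σ => flip s * σ) hmem hmem
    (fun σ _ => hinv σ) (fun σ _ => hinv σ) fun σ _ => ?_
  rw [mul_smul_comm, el_mul, ccount_mul_left (isHyper_flip s)]

lemma flip_mul_sjmProd {x : ℂ} (hx : x ≠ 0) (s : Fin k) (r : ℕ) (hr : r ≤ k) :
    el (flip s) * (sjmProd x r * hyperSum k) = sjmProd x r * hyperSum k := by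
  have h := pow_smul_compSum x r hr
  have h2 : sjmProd x r * hyperSum k = (x ^ k)⁻¹ • (x ^ r • compSum k x r) := by
    rw [h, smul_smul, inv_mul_cancel₀ (pow_ne_zero _ hx), one_smul]
  rw [h2, mul_smul_comm, mul_smul_comm, flip_mul_compSum]

/-- After right multiplication by `hyperSum`, the factors of the cycle generating function at the
points `hi i` turn into factors at `lo i` with the parameter shifted by one: for the transposition
`s = (lo i, hi i)` one has `jm (hi i) * s = s * jm (lo i) + 1`, and `s` is absorbed because the
component generating function is left `H_k`-invariant. -/
lemma pow_smul_cycSum {x : ℂ} (hx : x + 1 ≠ 0) (r : ℕ) (hr : r ≤ k) :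
    x ^ (2 * r) • (cycSum k x (2 * r) * hyperSum k) =
      x ^ (2 * k) • (sjmProd x r * (sjmProd (x + 1) r * hyperSum k)) := by
  induction r with
  | zero => simp [cycSum_zero, sjmProd]
  | succ r ih =>
    obtain ⟨s, hs⟩ : ∃ s : Fin k, (s : ℕ) = r := ⟨⟨r, hr⟩, rfl⟩
    have h1 := cycSum_succ x (lo s)
    have h2 := cycSum_succ x (hi s)
    have e1 : ((lo s : Fin (2 * k)) : ℕ) = 2 * r := by simp [lo, hs]
    have e2 : ((hi s : Fin (2 * k)) : ℕ) = 2 * r + 1 := by simp [hi, hs]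
    rw [e1] at h1
    rw [e2] at h2
    have h3 := sjmProd_succ x s
    have h4 := sjmProd_succ (x + 1) s
    rw [hs] at h3 h4
    have hflip : el (flip s) * hyperSum k = hyperSum k := by
      have := flip_mul_sjmProd hx s 0 (Nat.zero_le _)
      simpa [sjmProd] using this
    have hhi : sjm x (hi s) * hyperSum k =
        el (flip s) * (sjm (x + 1) (lo s) * hyperSum k) := by
      calc sjm x (hi s) * hyperSum k = sjm x (hi s) * el (flip s) * hyperSum k := by
            rw [mul_assoc, hflip]
        _ = _ := by
            rw [sjm_hi_mul_flip, add_mul, add_mul, smul_mul_assoc, hflip, one_mul, sjm, add_mul,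
              smul_mul_assoc, one_mul, mul_add, mul_smul_comm, hflip, mul_assoc, add_smul,
              one_smul]
            abel
    have hc1 := (sjm_commute_sjmProd x x (hi s) r).eq
    have hc2 := (sjm_commute_sjmProd x (x + 1) (hi s) r).eq
    have hc3 := (sjm_commute_sjmProd (x + 1) (x + 1) (lo s) r).eq
    have hf := (flip_commute_sjmProd (x + 1) s r hs.ge).eq
    calc x ^ (2 * (r + 1)) • (cycSum k x (2 * (r + 1)) * hyperSum k)
        = x ^ (2 * r) • ((x • (x • cycSum k x (2 * r + 1 + 1))) * hyperSum k) := by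
          rw [smul_smul, smul_mul_assoc, smul_smul]
          congr 1
          ring
      _ = sjm x (hi s) * (sjm x (lo s) * (x ^ (2 * r) • (cycSum k x (2 * r) * hyperSum k))) := by
          rw [h2, ← mul_smul_comm x (sjm x (hi s)), h1, mul_smul_comm, mul_smul_comm]
          simp only [mul_assoc]
      _ = x ^ (2 * k) • (sjm x (lo s) * (sjmProd x r * (sjmProd (x + 1) r *
            (sjm x (hi s) * hyperSum k)))) := by
          rw [ih (by omega), mul_smul_comm, mul_smul_comm, ← mul_assoc (sjm x (hi s)),
            (sjm_commute x x (hi s) (lo s)).eq, mul_assoc, ← mul_assoc (sjm x (hi s)), hc1,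
            mul_assoc, ← mul_assoc (sjm x (hi s)), hc2, mul_assoc]
      _ = x ^ (2 * k) • (sjm x (lo s) * (sjmProd x r * (el (flip s) *
            (sjmProd (x + 1) (r + 1) * hyperSum k)))) := by
          rw [hhi, ← mul_assoc (sjmProd (x + 1) r), ← hf, mul_assoc,
            ← mul_assoc (sjmProd (x + 1) r), ← hc3, h4]
      _ = _ := by
          rw [flip_mul_sjmProd hx s (r + 1) hr, h3, mul_assoc]

lemma toGA_ccount {x : ℂ} (hx : x ≠ 0) :
    toGA (fun σ : Equiv.Perm (Fin (2 * k)) => x ^ ccount σ) = sjmProd x k * hyperSum k := by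
  have h := pow_smul_compSum x k le_rfl
  have hu : pairSet k k = Finset.univ := by
    ext σ
    simp only [mem_pairSet, Finset.mem_univ, iff_true]
    intro s hs
    exact absurd s.isLt (by omega)
  rw [← smul_right_injective _ (pow_ne_zero k hx) h, compSum, hu, toGA]

lemma toGA_cyc {x : ℂ} (hx : x ≠ 0) (hx' : x + 1 ≠ 0) :
    toGA (fun σ : Equiv.Perm (Fin (2 * k)) => x ^ cyc σ) * hyperSum k =
      sjmProd x k * (sjmProd (x + 1) k * hyperSum k) := by
  have h := pow_smul_cycSum hx' k le_rfl
  have hu : fixSet k (2 * k) = Finset.univ := by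
    ext σ
    simp only [mem_fixSet, Finset.mem_univ, iff_true]
    intro s hs
    exact absurd s.isLt (by omega)
  rw [← smul_right_injective _ (pow_ne_zero (2 * k) hx) h, cycSum, hu, toGA]

/-! ### `M_{2k}` as a transversal of `S_{2k} / H_k` -/

lemma isHyper_of_partner_eq {σ τ : Equiv.Perm (Fin (2 * k))} (h : partner τ = partner σ) :
    IsHyper (τ⁻¹ * σ) := by
  rw [isHyper_iff_partner, partner_mul, ← h, partner]
  simp [mul_assoc]

lemma MProp.range_lo {τ : Equiv.Perm (Fin (2 * k))} (h : MProp τ) :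
    Set.range (fun i : Fin k => τ (lo i)) = {x | x < partner τ x} := by
  ext x
  obtain ⟨y, rfl⟩ := τ.surjective x
  have hy : partner τ (τ y) = τ (mu k y) := by simp [partner_apply]
  simp only [Set.mem_range, Set.mem_ofPred_eq, EmbeddingLike.apply_eq_iff_eq, hy]
  rcases lo_or_hi y with ⟨i, rfl⟩ | ⟨i, rfl⟩
  · simp [h.1 i]
  · simp only [mu_hi, (h.1 i).not_gt, iff_false, not_exists]
    exact fun j => lo_ne_hi j i

lemma MProp.eq_of_partner_eq {τ τ' : Equiv.Perm (Fin (2 * k))} (h : MProp τ) (h' : MProp τ')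
    (e : partner τ = partner τ') : τ = τ' := by
  have hr := h.range_lo
  rw [e, ← h'.range_lo] at hr
  have hlo : (fun i : Fin k => τ (lo i)) = fun i => τ' (lo i) :=
    (StrictMono.range_inj (fun i j hij => h.2 i j hij) (fun i j hij => h'.2 i j hij)).1 hr
  have hlo' : ∀ i : Fin k, τ (lo i) = τ' (lo i) := fun i => congrFun hlo i
  ext x
  rcases lo_or_hi x with ⟨i, rfl⟩ | ⟨i, rfl⟩
  · rw [hlo']
  · have h1 : τ (hi i) = partner τ (τ (lo i)) := by simp [partner_apply]
    have h2 : τ' (hi i) = partner τ' (τ' (lo i)) := by simp [partner_apply]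
    rw [h1, h2, e, hlo']

/-- Every pairing is the pairing of some element of `M_{2k}`: list the smaller points of its
pairs in increasing order, each followed by its partner. -/
lemma exists_MProp (σ : Equiv.Perm (Fin (2 * k))) :
    ∃ τ : Equiv.Perm (Fin (2 * k)), MProp τ ∧ partner τ = partner σ := by
  classical
  let S : Finset (Fin (2 * k)) := Finset.univ.filter fun x => x < partner σ x
  have hS : S.card = k := by
    have h1 := Finset.card_filter_add_card_filter_not (s := (Finset.univ : Finset (Fin (2 * k))))
      (fun x => x < partner σ x)
    have h2 : S.card =
        (Finset.univ.filter fun x : Fin (2 * k) => ¬ x < partner σ x).card := by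
      refine Finset.card_nbij' (partner σ) (partner σ) ?_ ?_ ?_ ?_
      · intro x hx
        simp only [S, Finset.mem_univ, true_and, Finset.coe_filter,
          Set.mem_ofPred_eq] at hx ⊢
        rw [partner_partner]
        exact hx.not_gt
      · intro x hx
        simp only [S, Finset.mem_univ, true_and, Finset.coe_filter,
          Set.mem_ofPred_eq] at hx ⊢
        rw [partner_partner]
        exact lt_of_le_of_ne (not_lt.1 hx) (partner_ne _ _)
      · intro x _; simp
      · intro x _; simp
    rw [← h2, Finset.card_univ, Fintype.card_fin] at h1
    change S.card + S.card = 2 * k at h1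
    omega
  let b := S.orderEmbOfFin hS
  have hb : ∀ i, b i < partner σ (b i) := by
    intro i
    have := Finset.orderEmbOfFin_mem S hS i
    exact (Finset.mem_filter.1 this).2
  have hbne : ∀ i j, b i ≠ partner σ (b j) := by
    intro i j e
    have h1 := hb i
    have h2 := hb j
    rw [← e] at h2
    rw [e, partner_partner] at h1
    exact lt_asymm (e ▸ h1) h2
  let t : Fin (2 * k) → Fin (2 * k) := fun x =>
    if (x : ℕ) % 2 = 0 then b ⟨(x : ℕ) / 2, by omega⟩
    else partner σ (b ⟨(x : ℕ) / 2, by omega⟩)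
  have tlo : ∀ i, t (lo i) = b i := by
    intro i
    simp [t, lo]
  have thi : ∀ i, t (hi i) = partner σ (b i) := by
    intro i
    have e1 : ¬ ((hi i : Fin (2 * k)) : ℕ) % 2 = 0 := by simp only [hi]; omega
    have e2 : (⟨((hi i : Fin (2 * k)) : ℕ) / 2, by omega⟩ : Fin k) = i := by
      apply Fin.ext; simp only [hi]; omega
    simp only [t, e1, e2, if_false]
  have tinj : Function.Injective t := by
    intro x y hxy
    rcases lo_or_hi x with ⟨i, rfl⟩ | ⟨i, rfl⟩ <;> rcases lo_or_hi y with ⟨j, rfl⟩ | ⟨j, rfl⟩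
    · rw [tlo, tlo] at hxy; rw [b.injective hxy]
    · rw [tlo, thi] at hxy; exact absurd hxy (hbne _ _)
    · rw [tlo, thi] at hxy; exact absurd hxy.symm (hbne _ _)
    · rw [thi, thi] at hxy; rw [b.injective ((partner σ).injective hxy)]
  let τ : Equiv.Perm (Fin (2 * k)) := Equiv.ofBijective t (Finite.injective_iff_bijective.1 tinj)
  have hτ : ∀ x, τ x = t x := fun x => rfl
  refine ⟨τ, ⟨fun i => ?_, fun i j hij => ?_⟩, ?_⟩
  · rw [hτ, hτ, tlo, thi]; exact hb i
  · rw [hτ, hτ, tlo, tlo]; exact b.strictMono hij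
  · ext x
    obtain ⟨y, rfl⟩ := τ.surjective x
    have hy : partner τ (τ y) = τ (mu k y) := by simp [partner_apply]
    rw [hy]
    rcases lo_or_hi y with ⟨i, rfl⟩ | ⟨i, rfl⟩
    · rw [mu_lo, hτ, hτ, thi, tlo]
    · rw [mu_hi, hτ, hτ, thi, tlo, partner_partner]

/-- The order of `H_k`, as a complex number. -/
noncomputable def hcard (k : ℕ) : ℂ := ((pairSet k 0).card : ℂ)

lemma hcard_ne_zero : hcard k ≠ 0 := by
  rw [hcard, Nat.cast_ne_zero, Finset.card_ne_zero]
  exact ⟨1, mem_pairSet_zero.2 isHyper_one⟩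

/-- `M_{2k}` contains exactly one element of each coset `τ H_k`. -/
lemma sum_Mset (f : Equiv.Perm (Fin (2 * k)) → ℂ)
    (hf : ∀ σ ζ, IsHyper ζ → f (σ * ζ) = f σ) :
    ∑ σ, f σ = hcard k * ∑ τ ∈ Mset k, f τ := by
  have hM : ∀ τ, τ ∈ Mset k ↔ MProp τ := by intro τ; simp [Mset]
  have h1 : ∑ q ∈ Mset k ×ˢ pairSet k 0, f (q.1 * q.2) = ∑ σ, f σ := by
    refine Finset.sum_nbij (fun q => q.1 * q.2) (fun _ _ => Finset.mem_univ _) ?_ ?_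
      fun _ _ => rfl
    · rintro ⟨τ, ζ⟩ hq ⟨τ', ζ'⟩ hq' e
      simp only [Finset.mem_coe, Finset.mem_product, hM, mem_pairSet_zero] at hq hq' e
      have hp := congrArg partner e
      rw [hq.2.partner_mul_right, hq'.2.partner_mul_right] at hp
      have := hq.1.eq_of_partner_eq hq'.1 hp
      subst this
      rw [mul_left_cancel e]
    · intro σ _
      obtain ⟨τ, hτ, hp⟩ := exists_MProp σ
      refine ⟨(τ, τ⁻¹ * σ), ?_, by simp⟩
      simp only [Finset.mem_coe, Finset.mem_product, hM, mem_pairSet_zero]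
      exact ⟨hτ, isHyper_of_partner_eq hp⟩
  rw [← h1, Finset.sum_product, Finset.mul_sum]
  refine Finset.sum_congr rfl fun τ _ => ?_
  rw [Finset.sum_congr rfl fun ζ hζ => hf τ ζ (mem_pairSet_zero.1 hζ), Finset.sum_const,
    nsmul_eq_mul, hcard]

/-! ### Sign twists and invariance -/

lemma sgn_mul (σ τ : Equiv.Perm (Fin (2 * k))) : sgn ℂ (σ * τ) = sgn ℂ σ * sgn ℂ τ := by
  simp [sgn]

lemma sgn_mul_self (σ : Equiv.Perm (Fin (2 * k))) : sgn ℂ σ * sgn ℂ σ = 1 := by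
  rcases Int.units_eq_one_or (Equiv.Perm.sign σ) with h | h <;> simp [sgn, h]

lemma sgn_inv (σ : Equiv.Perm (Fin (2 * k))) : sgn ℂ σ⁻¹ = sgn ℂ σ := by
  simp [sgn]

lemma cyc_add_sum (σ : Equiv.Perm (Fin (2 * k))) :
    cyc σ + σ.cycleType.sum = 2 * k + Multiset.card σ.cycleType := by
  classical
  have h1 := Finset.card_filter_add_card_filter_not (s := (Finset.univ : Finset (Fin (2 * k))))
    (fun x => σ x = x)
  rw [Finset.card_univ, Fintype.card_fin] at h1
  have h2 : σ.support = Finset.univ.filter fun x => ¬ σ x = x := by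
    ext x; simp
  rw [Equiv.Perm.sum_cycleType, h2, cyc]
  omega

lemma cyc_conj (σ τ : Equiv.Perm (Fin (2 * k))) : cyc (τ * σ * τ⁻¹) = cyc σ := by
  have h1 := cyc_add_sum σ
  have h2 := cyc_add_sum (τ * σ * τ⁻¹)
  rw [Equiv.Perm.cycleType_conj] at h2
  omega

lemma sgn_mul_neg_pow_cyc (y : ℂ) (σ : Equiv.Perm (Fin (2 * k))) :
    sgn ℂ σ * y ^ cyc σ = (-y) ^ cyc σ := by
  have h : sgn ℂ σ = (-1) ^ cyc σ := by
    rw [sgn, Equiv.Perm.sign_of_cycleType]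
    push_cast
    have h1 := cyc_add_sum σ
    have h2 : Even (cyc σ + (σ.cycleType.sum + Multiset.card σ.cycleType)) :=
      ⟨k + Multiset.card σ.cycleType, by omega⟩
    have h3 : (-1 : ℂ) ^ cyc σ * (-1) ^ (σ.cycleType.sum + Multiset.card σ.cycleType) = 1 := by
      rw [← pow_add, h2.neg_one_pow]
    have h4 : (-1 : ℂ) ^ cyc σ * (-1) ^ cyc σ = 1 := by
      rw [← mul_pow]; simp
    linear_combination (-1 : ℂ) ^ cyc σ * h3 -
      (-1 : ℂ) ^ (σ.cycleType.sum + Multiset.card σ.cycleType) * h4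
  rw [h, ← mul_pow, neg_one_mul]

lemma conv_sgn (f g : Equiv.Perm (Fin (2 * k)) → ℂ) :
    conv (fun σ => sgn ℂ σ * f σ) (fun σ => sgn ℂ σ * g σ) = fun σ => sgn ℂ σ * conv f g σ := by
  funext σ
  simp only [conv, Finset.mul_sum]
  refine Finset.sum_congr rfl fun τ _ => ?_
  rw [sgn_mul, sgn_inv]
  linear_combination sgn ℂ σ * f τ * g (τ⁻¹ * σ) * sgn_mul_self τ

lemma el_mul_toGA (ζ : Equiv.Perm (Fin (2 * k))) (f : Equiv.Perm (Fin (2 * k)) → ℂ) :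
    el ζ * toGA f = toGA fun σ => f (ζ⁻¹ * σ) := by
  rw [toGA, toGA, Finset.mul_sum]
  refine Fintype.sum_equiv (Equiv.mulLeft ζ) _ _ fun σ => ?_
  simp [el_mul]

lemma toGA_mul_el (ζ : Equiv.Perm (Fin (2 * k))) (f : Equiv.Perm (Fin (2 * k)) → ℂ) :
    toGA f * el ζ = toGA fun σ => f (σ * ζ⁻¹) := by
  rw [toGA, toGA, Finset.sum_mul]
  refine Fintype.sum_equiv (Equiv.mulRight ζ) _ _ fun σ => ?_
  simp [el_mul]

lemma toGA_oneH : toGA (k := k) oneH = hyperSum k := by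
  classical
  have h : pairSet k 0 = Finset.univ.filter IsHyper := by
    ext σ; simp [mem_pairSet_zero]
  rw [toGA, hyperSum, h, Finset.sum_filter]
  refine Finset.sum_congr rfl fun σ _ => ?_
  simp only [oneH]
  split_ifs <;> simp

lemma toGA_oneHeps : toGA (k := k) oneHeps = ∑ ζ ∈ pairSet k 0, sgn ℂ ζ • el ζ := by
  classical
  have h : pairSet k 0 = Finset.univ.filter IsHyper := by
    ext σ; simp [mem_pairSet_zero]
  rw [toGA, h, Finset.sum_filter]
  refine Finset.sum_congr rfl fun σ _ => ?_
  simp only [oneHeps]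
  split_ifs <;> simp

lemma hyperSum_mul {a : GA k} (ha : ∀ ζ : Equiv.Perm (Fin (2 * k)), IsHyper ζ → el ζ * a = a) :
    hyperSum k * a = hcard k • a := by
  rw [hyperSum, Finset.sum_mul,
    Finset.sum_congr rfl fun ζ hζ => ha ζ (mem_pairSet_zero.1 hζ), Finset.sum_const, hcard,
    Nat.cast_smul_eq_nsmul]

lemma oneHeps_mul {a : GA k}
    (ha : ∀ ζ : Equiv.Perm (Fin (2 * k)), IsHyper ζ → el ζ * a = sgn ℂ ζ • a) :
    toGA oneHeps * a = hcard k • a := by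
  have h : ∀ ζ ∈ pairSet k 0, sgn ℂ ζ • el ζ * a = a := fun ζ hζ => by
    rw [smul_mul_assoc, ha ζ (mem_pairSet_zero.1 hζ), smul_smul, sgn_mul_self, one_smul]
  rw [toGA_oneHeps, Finset.sum_mul, Finset.sum_congr rfl h, Finset.sum_const, hcard,
    Nat.cast_smul_eq_nsmul]

lemma mul_oneHeps {a : GA k}
    (ha : ∀ ζ : Equiv.Perm (Fin (2 * k)), IsHyper ζ → a * el ζ = sgn ℂ ζ • a) :
    a * toGA oneHeps = hcard k • a := by
  have h : ∀ ζ ∈ pairSet k 0, a * sgn ℂ ζ • el ζ = a := fun ζ hζ => by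
    rw [mul_smul_comm, ha ζ (mem_pairSet_zero.1 hζ), smul_smul, sgn_mul_self, one_smul]
  rw [toGA_oneHeps, Finset.mul_sum, Finset.sum_congr rfl h, Finset.sum_const, hcard,
    Nat.cast_smul_eq_nsmul]

/-- The function `T^Sp(·; z)` with `x = -2z`. -/
noncomputable def spT (x : ℂ) : Equiv.Perm (Fin (2 * k)) → ℂ :=
  fun σ => (-1 : ℂ) ^ k * sgn ℂ σ * x ^ ccount σ

lemma spT_mul_left (x : ℂ) {ζ : Equiv.Perm (Fin (2 * k))} (h : IsHyper ζ)
    (σ : Equiv.Perm (Fin (2 * k))) : spT x (ζ * σ) = sgn ℂ ζ * spT x σ := by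
  simp only [spT, ccount_mul_left h, sgn_mul]; ring

lemma spT_mul_right (x : ℂ) {ζ : Equiv.Perm (Fin (2 * k))} (h : IsHyper ζ)
    (σ : Equiv.Perm (Fin (2 * k))) : spT x (σ * ζ) = sgn ℂ ζ * spT x σ := by
  simp only [spT, ccount_mul_right h, sgn_mul]; ring

lemma toGA_ccount_mul {x y : ℂ} (hx : x ≠ 0) (hy : y ≠ 0) :
    toGA (fun σ : Equiv.Perm (Fin (2 * k)) => x ^ ccount σ) *
        toGA (fun σ : Equiv.Perm (Fin (2 * k)) => y ^ ccount σ) =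
      hcard k • (sjmProd x k * (sjmProd y k * hyperSum k)) := by
  have h : hyperSum k * toGA (fun σ : Equiv.Perm (Fin (2 * k)) => y ^ ccount σ) =
      hcard k • toGA (fun σ : Equiv.Perm (Fin (2 * k)) => y ^ ccount σ) :=
    hyperSum_mul fun ζ hζ => by
      rw [el_mul_toGA]
      simp only [ccount_mul_left hζ.inv]
  rw [toGA_ccount hx, mul_assoc, h, toGA_ccount hy, mul_smul_comm]

/-- The sign twist of an identity in the group algebra: `f ↦ ε f` is multiplicative, turns `oneH`
into `oneHeps`, and turns `u ^ cyc` into `(-u) ^ cyc`. -/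
lemma toGA_spT_mul {x y u : ℂ}
    (h : toGA (fun σ : Equiv.Perm (Fin (2 * k)) => x ^ ccount σ) *
        toGA (fun σ : Equiv.Perm (Fin (2 * k)) => y ^ ccount σ) =
      hcard k • (toGA (fun σ : Equiv.Perm (Fin (2 * k)) => u ^ cyc σ) * toGA oneH)) :
    toGA (spT (k := k) x) * toGA (spT y) =
      hcard k • (toGA (fun σ : Equiv.Perm (Fin (2 * k)) => (-u) ^ cyc σ) * toGA oneHeps) := by
  rw [← toGA_conv, ← toGA_conv, ← toGA_smul] at h
  have h' := toGA_injective h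
  have e1 : ∀ z : ℂ, spT (k := k) z = fun σ => (-1 : ℂ) ^ k * (sgn ℂ σ * z ^ ccount σ) :=
    fun z => funext fun σ => mul_assoc _ _ _
  have e2 : (oneHeps : Equiv.Perm (Fin (2 * k)) → ℂ) = fun σ => sgn ℂ σ * oneH σ := by
    funext σ; simp [oneHeps, oneH]
  have e3 : (fun σ : Equiv.Perm (Fin (2 * k)) => (-u) ^ cyc σ) = fun σ => sgn ℂ σ * u ^ cyc σ :=
    funext fun σ => (sgn_mul_neg_pow_cyc u σ).symm
  have hk : (-1 : ℂ) ^ k * (-1) ^ k = 1 := by rw [← mul_pow]; simp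
  rw [e1, e1, toGA_smul, toGA_smul, smul_mul_smul_comm, hk, one_smul, ← toGA_conv, conv_sgn, h',
    e2, e3, ← toGA_conv, conv_sgn, ← toGA_smul]
  congr 1
  funext σ
  ring

lemma toGA_spT_mul_spT {x : ℂ} (hx : x ≠ 0) (hx' : x + 1 ≠ 0) :
    toGA (spT (k := k) (x + 1)) * toGA (spT x) =
      hcard k • (toGA (fun σ : Equiv.Perm (Fin (2 * k)) => (-x) ^ cyc σ) * toGA oneHeps) := by
  apply toGA_spT_mul
  rw [toGA_ccount_mul hx' hx, toGA_oneH, toGA_cyc hx hx', ← mul_assoc,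
    (sjmProd_commute (x + 1) x k k).eq, mul_assoc]

lemma toGA_spT_mul_spT' {x : ℂ} (hx : x ≠ 0) (hx' : x + 1 ≠ 0) :
    toGA (spT (k := k) x) * toGA (spT (x + 1)) =
      hcard k • (toGA (fun σ : Equiv.Perm (Fin (2 * k)) => (-x) ^ cyc σ) * toGA oneHeps) := by
  apply toGA_spT_mul
  rw [toGA_ccount_mul hx hx', toGA_oneH, toGA_cyc hx hx']

lemma toGA_cyc_commute (y : ℂ) (a : GA k) (ha : ∃ f, a = toGA f) :
    Commute (toGA fun σ : Equiv.Perm (Fin (2 * k)) => y ^ cyc σ) a := by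
  obtain ⟨f, rfl⟩ := ha
  rw [toGA.eq_1 f]
  refine Commute.sum_right _ _ _ fun ζ _ => Commute.smul_right ?_ _
  rw [Commute, SemiconjBy, el_mul_toGA, toGA_mul_el]
  congr 1
  funext σ
  rw [← cyc_conj (σ * ζ⁻¹) ζ⁻¹]
  simp [mul_assoc]

/-- Full convolution with `T^Sp` is `|H_k|` times the reduced one, since the summand is constant
on the cosets `τ H_k`. -/
lemma toGA_mul_eq_sconv {x : ℂ} (g : Equiv.Perm (Fin (2 * k)) → ℂ)
    (hg : ∀ ζ, IsHyper ζ → ∀ σ, g (ζ * σ) = sgn ℂ ζ * g σ) :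
    toGA (spT x) * toGA g = hcard k • toGA (sconv (spT x) g) := by
  rw [← toGA_conv, ← toGA_smul]
  congr 1
  funext σ
  rw [conv, sconv]
  refine sum_Mset (fun τ => spT x τ * g (τ⁻¹ * σ)) fun τ ζ hζ => ?_
  rw [spT_mul_right x hζ, _root_.mul_inv_rev, mul_assoc ζ⁻¹, hg _ hζ.inv, sgn_inv]
  linear_combination spT x τ * g (τ⁻¹ * σ) * sgn_mul_self ζ

end

/-- `Wg^{A II}(·;n) = T^{Sp}(·;n) * Wg^U(·;2n)` equals
`Wg^{Sp}(·; n - 1/2)`. -/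
theorem stmt11 (n k : ℕ) (hk : 0 < k) (hnk : k ≤ n)
    (WgU : Equiv.Perm (Fin (2 * k)) → ℂ)
    (hWg : conv (fun σ => ((2 * n : ℕ) : ℂ) ^ cyc σ) WgU = deltaId)
    (hWg' : conv WgU (fun σ => ((2 * n : ℕ) : ℂ) ^ cyc σ) = deltaId)
    (WgSp : Equiv.Perm (Fin (2 * k)) → ℂ)
    (hbiSp : ∀ (σ ζ ζ' : Equiv.Perm (Fin (2 * k))), IsHyper ζ → IsHyper ζ' →
      WgSp (ζ * σ * ζ') = sgn ℂ ζ * sgn ℂ ζ' * WgSp σ)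
    (hWgSp : sconv
        (fun σ => (-1 : ℂ) ^ k * sgn ℂ σ * (-(2 * ((n : ℂ) - 1 / 2))) ^ ccount σ) WgSp
      = oneHeps) :
    (∀ (σ ζ ζ' : Equiv.Perm (Fin (2 * k))), IsHyper ζ → IsHyper ζ' →
      conv (fun τ => (-1 : ℂ) ^ k * sgn ℂ τ * (-(2 * (n : ℂ))) ^ ccount τ) WgU (ζ * σ * ζ')
        = sgn ℂ ζ * sgn ℂ ζ' *
            conv (fun τ => (-1 : ℂ) ^ k * sgn ℂ τ * (-(2 * (n : ℂ))) ^ ccount τ) WgU σ) ∧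
    sconv (fun σ => (-1 : ℂ) ^ k * sgn ℂ σ * (-(2 * ((n : ℂ) - 1 / 2))) ^ ccount σ)
        (conv (fun τ => (-1 : ℂ) ^ k * sgn ℂ τ * (-(2 * (n : ℂ))) ^ ccount τ) WgU)
      = oneHeps ∧
    conv (fun τ => (-1 : ℂ) ^ k * sgn ℂ τ * (-(2 * (n : ℂ))) ^ ccount τ) WgU = WgSp := by
  have hn : (n : ℂ) ≠ 0 := by
    rw [Nat.cast_ne_zero]; omega
  -- the parameter `x = -2n`, for which `T^Sp(·; n)` and `T^Sp(·; n - 1/2)` are `spT x`, `spT (x + 1)`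
  obtain ⟨x, hxdef⟩ : ∃ x : ℂ, x = -(2 * (n : ℂ)) := ⟨_, rfl⟩
  have hx : x ≠ 0 := by rw [hxdef]; simpa using hn
  have hx' : x + 1 ≠ 0 := by
    intro h
    have h1 : ((2 * n : ℕ) : ℂ) = ((1 : ℕ) : ℂ) := by
      push_cast; rw [hxdef] at h; linear_combination -h
    have h2 := Nat.cast_injective h1
    omega
  have hn2 : ((2 * n : ℕ) : ℂ) = -x := by rw [hxdef]; push_cast; ring
  have hx1 : -(2 * ((n : ℂ) - 1 / 2)) = x + 1 := by rw [hxdef]; ring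
  rw [hx1] at hWgSp ⊢
  rw [← hxdef]
  rw [hn2] at hWg hWg'
  change sconv (spT (x + 1)) WgSp = oneHeps at hWgSp
  change (∀ (σ ζ ζ' : Equiv.Perm (Fin (2 * k))), IsHyper ζ → IsHyper ζ' →
      conv (spT x) WgU (ζ * σ * ζ') = sgn ℂ ζ * sgn ℂ ζ' * conv (spT x) WgU σ) ∧
    sconv (spT (x + 1)) (conv (spT x) WgU) = oneHeps ∧ conv (spT x) WgU = WgSp
  set U : Equiv.Perm (Fin (2 * k)) → ℂ := fun σ => (-x) ^ cyc σ with hU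
  have huw : toGA U * toGA WgU = 1 := by rw [← toGA_conv, hWg, toGA_deltaId]
  have hwu : toGA WgU * toGA U = 1 := by rw [← toGA_conv, hWg', toGA_deltaId]
  -- the inverse of a central element is central
  have hwc : ∀ f, toGA WgU * toGA f = toGA f * toGA WgU := by
    intro f
    have hc : toGA U * toGA f = toGA f * toGA U := (toGA_cyc_commute (-x) _ ⟨f, rfl⟩).eq
    calc toGA WgU * toGA f = toGA WgU * (toGA f * toGA U) * toGA WgU := by
          rw [mul_assoc, mul_assoc, huw, mul_one]
      _ = toGA f * toGA WgU := by rw [← hc, ← mul_assoc, hwu, one_mul]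
  have hwel : ∀ ζ, toGA WgU * el ζ = el ζ * toGA WgU := by
    intro ζ
    have h : el ζ = toGA fun σ => deltaId (ζ⁻¹ * σ) := by
      rw [← el_mul_toGA, toGA_deltaId, mul_one]
    rw [h, hwc]
  have hWl : ∀ ζ, IsHyper ζ → ∀ σ, conv (spT x) WgU (ζ * σ) = sgn ℂ ζ * conv (spT x) WgU σ := by
    intro ζ hζ σ
    have h : el ζ⁻¹ * toGA (conv (spT x) WgU) =
        toGA fun σ => sgn ℂ ζ * conv (spT x) WgU σ := by
      rw [toGA_smul, toGA_conv, ← mul_assoc, el_mul_toGA, inv_inv]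
      simp only [spT_mul_left x hζ]
      rw [toGA_smul, smul_mul_assoc]
    rw [el_mul_toGA, inv_inv] at h
    exact congrFun (toGA_injective h) σ
  have hWr : ∀ ζ, IsHyper ζ → ∀ σ, conv (spT x) WgU (σ * ζ) = sgn ℂ ζ * conv (spT x) WgU σ := by
    intro ζ hζ σ
    have h : toGA (conv (spT x) WgU) * el ζ⁻¹ =
        toGA fun σ => sgn ℂ ζ * conv (spT x) WgU σ := by
      rw [toGA_smul, toGA_conv, mul_assoc, hwel, ← mul_assoc, toGA_mul_el, inv_inv]
      simp only [spT_mul_right x hζ]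
      rw [toGA_smul, smul_mul_assoc]
    rw [toGA_mul_el, inv_inv] at h
    exact congrFun (toGA_injective h) σ
  have hTW : toGA (spT (x + 1)) * toGA (conv (spT x) WgU) = hcard k • toGA (k := k) oneHeps := by
    rw [toGA_conv, ← mul_assoc, toGA_spT_mul_spT hx hx', smul_mul_assoc, ← hU, mul_assoc, ← hwc,
      ← mul_assoc, huw, one_mul]
  have hWT : toGA (conv (spT x) WgU) * toGA (spT (x + 1)) = hcard k • toGA (k := k) oneHeps := by
    rw [toGA_conv, mul_assoc, hwc, ← mul_assoc, toGA_spT_mul_spT' hx hx', smul_mul_assoc, ← hU,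
      mul_assoc, ← hwc, ← mul_assoc, huw, one_mul]
  refine ⟨fun σ ζ ζ' hζ hζ' => ?_, ?_, ?_⟩
  · rw [hWr ζ' hζ', hWl ζ hζ]; ring
  · have h := toGA_mul_eq_sconv (x := x + 1) _ hWl
    rw [hTW] at h
    exact (toGA_injective (smul_right_injective _ hcard_ne_zero h)).symm
  · have hSl : ∀ ζ, IsHyper ζ → ∀ σ, WgSp (ζ * σ) = sgn ℂ ζ * WgSp σ := by
      intro ζ hζ σ
      have h := hbiSp σ ζ 1 hζ isHyper_one
      simpa [sgn] using h
    have h1 := toGA_mul_eq_sconv (x := x + 1) _ hSl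
    rw [hWgSp] at h1
    have h2 : toGA oneHeps * toGA WgSp = hcard k • toGA WgSp := by
      refine oneHeps_mul fun ζ hζ => ?_
      rw [el_mul_toGA, ← toGA_smul]
      simp only [hSl _ hζ.inv, sgn_inv]
    have h3 : toGA (conv (spT x) WgU) * toGA oneHeps = hcard k • toGA (conv (spT x) WgU) := by
      refine mul_oneHeps fun ζ hζ => ?_
      rw [toGA_mul_el, ← toGA_smul]
      simp only [hWr _ hζ.inv, sgn_inv]
    -- evaluate `W * T^Sp(·; n - 1/2) * WgSp` in two ways
    have h4 : hcard k • hcard k • toGA (conv (spT x) WgU) = hcard k • hcard k • toGA WgSp := by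
      rw [← h3, ← mul_smul_comm, ← h1, ← mul_assoc, hWT, smul_mul_assoc, h2]
    exact toGA_injective
      (smul_right_injective _ hcard_ne_zero (smul_right_injective _ hcard_ne_zero h4))

end WgPaper
end

section
/- Let a ≥ b ≥ 1, n = a + b, and let k be a positive integer with n ≥ k. Let U be a Haar-distributed random matrix from U(n), let I'_{ab} = diag(I_a, −I_b), and set W = (w_{ij}) = U* I'_{ab} U (a Hermitian unitary random matrix, associated with the symmetric space U(n)/U(a)×U(b)). For any sequences i = (i_1,…,i_k) and j = (j_1,…,j_k) in {1,…,n}, E[ w_{i_1 j_1} w_{i_2 j_2} ⋯ w_{i_k j_k} ] = Σ_{σ ∈ S_k} δ_σ(i,j) Wg^{AIII}(σ; a, b), where Wg^{AIII}(·; a, b) := T^{AIII}_{ab} * Wg^U(·; n) and T^{AIII}_{ab}(σ) = (a+b)^{e(σ)} (a−b)^{o(σ)}, with e(σ) (resp. o(σ)) the number of even-length (resp. odd-length) cycles of σ. -/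
/-!
Write `W = U* I'_{ab} U` and let `A = E[W^{⊗ k}]`, a matrix indexed by pairs of multi-indices.

Left-invariant probability measures on the compact group `U(n)` are right-invariant
(`map_mul_right_eq`), and `U ↦ U g` conjugates `W` by `g`, so `A` commutes with `g^{⊗ k}` for every
unitary `g` (`commU_moment`). For `k ≤ n` such an `A` is a combination `∑ c_σ P_σ` of permutation
operators (`CommU.exists_coeff`). This case of Schur–Weyl duality is elementary: the diagonal torus
shows that a nonzero entry of `A` has row and column multi-indices of equal content, so subtracting
a suitable combination of permutation operators kills the column at one injective multi-index;
permutation matrices then kill all injective columns, and a reflection mixing two coordinates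
`p, q`, followed by projection on one content, passes from a multi-index with fewer coincidences
to one with more (`CommU.column_update`).

The coefficients are found by contraction. The sum `∑_i ∏_s w_{i_s, i_{τ(s)}}` is a product of
traces of powers of `W`, hence equal to `T^{AIII}(τ)` for every `U` (`sum_prod_Wmat`,
`sum_eps_invariant`), whereas `∑_i δ_σ(i, i ∘ τ) = n^{cyc(σ⁻¹ τ)}` (`sum_deltaP`). Thus
`c * T^U = T^{AIII}`, and convolving with `Wg^U` gives `c = T^{AIII} * Wg^U`. Both evaluations
rest on `sum_invariant`, which factors a sum over `τ`-invariant colourings over the cycles of `τ`.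
-/

/-!
Weingarten calculus for classical compact Lie groups and compact symmetric spaces
(S. Matsumoto, "Weingarten calculus for matrix ensembles associated with compact
symmetric spaces"): common definitions.

We index `{1,…,m}` by `Fin m` (0-indexed), so the pair `{2r-1, 2r}` becomes
`{2r, 2r+1}` for `r ∈ Fin k`.
-/

open MeasureTheory Finset Matrix

namespace WgPaper

/-! ### Haar measure on the unitary group -/

instance instBorelSpaceUG (n : ℕ) : BorelSpace (UG n) := ⟨rfl⟩

instance instCompactSpaceUG (n : ℕ) : CompactSpace (UG n) := by
  refine isCompact_iff_compactSpace.1 (?_ : IsCompact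
    (Matrix.unitaryGroup (Fin n) ℂ : Set (Matrix (Fin n) (Fin n) ℂ)))
  have hK : IsCompact (Set.matrix (Metric.closedBall (0 : ℂ) 1) :
      Set (Matrix (Fin n) (Fin n) ℂ)) := (isCompact_closedBall _ _).matrix
  refine hK.of_isClosed_subset ?_ ?_
  · have : (Matrix.unitaryGroup (Fin n) ℂ : Set (Matrix (Fin n) (Fin n) ℂ))
        = {U | U * star U = 1} := by
      ext U
      exact Matrix.mem_unitaryGroup_iff
    rw [this]
    exact isClosed_eq (continuous_id.mul continuous_star) continuous_const
  · intro U hU i j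
    simpa using entry_norm_bound_of_unitary hU i j

/-- A left-invariant probability measure on the compact group `U(n)` is right-invariant:
both `μ` and its right translate are normalized Haar measures. -/
lemma map_mul_right_eq {n : ℕ} (μ : Measure (UG n)) [IsProbabilityMeasure μ]
    (hμ : ∀ g : UG n, μ.map (fun x => g * x) = μ) (g : UG n) :
    μ.map (fun x => x * g) = μ := by
  have : μ.IsMulLeftInvariant := ⟨hμ⟩
  have : μ.IsHaarMeasure :=
    Measure.isHaarMeasure_of_isCompact_nonempty_interior μ Set.univ isCompact_univ
      (by simp) (by simp) (by simp)
  have : IsProbabilityMeasure (μ.map (fun x => x * g)) :=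
    Measure.isProbabilityMeasure_map (measurable_mul_const g).aemeasurable
  exact Measure.isHaarMeasure_eq_of_isProbabilityMeasure _ _

lemma integral_mul_right {n : ℕ} (μ : Measure (UG n)) [IsProbabilityMeasure μ]
    (hμ : ∀ g : UG n, μ.map (fun x => g * x) = μ) (g : UG n) {f : UG n → ℂ}
    (hf : Continuous f) : ∫ U, f (U * g) ∂μ = ∫ U, f U ∂μ := by
  conv_rhs => rw [← map_mul_right_eq μ hμ g]
  rw [integral_map (measurable_mul_const g).aemeasurable hf.aestronglyMeasurable]

lemma integrable_of_continuous {n : ℕ} (μ : Measure (UG n)) [IsProbabilityMeasure μ]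
    {f : UG n → ℂ} (hf : Continuous f) : Integrable f μ :=
  hf.integrable_of_hasCompactSupport (HasCompactSupport.of_compactSpace f)


/-! ### Sums over colourings invariant under a permutation -/

section Cycles

variable {R : Type*} [CommRing R] {X : Type*} [Fintype X] [DecidableEq X]

open scoped Classical in
/-- A product over the cycles of `τ` (the quotient by `SameCycle`) of a function of the cycle
length, in terms of `cycleType` (which records only cycles of length at least two). -/
lemma prod_quotient_eq {m : ℕ} (τ : Equiv.Perm (Fin m)) (h : ℕ → R) :
    ∏ q : Quotient (Equiv.Perm.SameCycle.setoid τ),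
        h (univ.filter fun x => Quotient.mk (Equiv.Perm.SameCycle.setoid τ) x = q).card
      = (τ.cycleType.map h).prod * h 1 ^ (univ.filter fun x => τ x = x).card := by
  set S := Equiv.Perm.SameCycle.setoid τ with hS
  have hmk : ∀ x y, Quotient.mk S x = Quotient.mk S y ↔ τ.SameCycle x y :=
    fun x y => Quotient.eq
  have hfix : ∀ x y, τ.SameCycle x y → τ y = y → x = y := fun x y hxy hy =>
    (hxy.symm.eq_of_left hy).symm
  rw [← prod_filter_mul_prod_filter_not univ (fun q : Quotient S => ∃ x, q = ⟦x⟧ ∧ τ x ≠ x)]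
  congr 1
  · rw [Equiv.Perm.cycleType_def, Multiset.map_map]
    change _ = ∏ c ∈ τ.cycleFactorsFinset, h c.support.card
    refine prod_bij (fun q _ => Quotient.lift τ.cycleOf
      (fun x y (hxy : τ.SameCycle x y) => hxy.cycleOf_eq) q) ?_ ?_ ?_ ?_
    · intro q hq
      obtain ⟨x, rfl, hx⟩ := (mem_filter.1 hq).2
      exact Equiv.Perm.cycleOf_mem_cycleFactorsFinset_iff.2 (Equiv.Perm.mem_support.2 hx)
    · intro q hq q' hq' hqq
      obtain ⟨x, rfl, hx⟩ := (mem_filter.1 hq).2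
      obtain ⟨y, rfl, hy⟩ := (mem_filter.1 hq').2
      exact (hmk x y).2 ((Equiv.Perm.sameCycle_iff_cycleOf_eq_of_mem_support
        (Equiv.Perm.mem_support.2 hx) (Equiv.Perm.mem_support.2 hy)).2 hqq)
    · intro c hc
      obtain ⟨x, hx⟩ := (Equiv.Perm.mem_cycleFactorsFinset_iff.1 hc).1.nonempty_support
      have hcx := Equiv.Perm.cycle_is_cycleOf hx hc
      refine ⟨⟦x⟧, ?_, hcx.symm⟩
      simp only [mem_filter, mem_univ, true_and]
      exact ⟨x, rfl, Equiv.Perm.mem_support.1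
        (Equiv.Perm.mem_cycleFactorsFinset_support_le hc hx)⟩
    · intro q hq
      obtain ⟨x, rfl, hx⟩ := (mem_filter.1 hq).2
      congr 2
      ext y
      simp only [mem_filter, mem_univ, true_and, Quotient.lift_mk]
      rw [Equiv.Perm.mem_support_cycleOf_iff' hx]
      exact (hmk y x).trans Equiv.Perm.sameCycle_comm
  · rw [← prod_const]
    symm
    refine prod_bij (fun x _ => Quotient.mk S x) ?_ ?_ ?_ ?_
    · intro x hx
      simp only [mem_filter, mem_univ, true_and] at hx ⊢
      rintro ⟨y, hxy, hy⟩
      have := hfix y x ((hmk x y).1 hxy).symm hx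
      exact hy (this ▸ hx)
    · intro x hx y hy hxy
      exact hfix x y ((hmk x y).1 hxy) (mem_filter.1 hy).2
    · intro q hq
      induction q using Quotient.inductionOn with
      | h x =>
        refine ⟨x, ?_, rfl⟩
        simp only [mem_filter, mem_univ, true_and] at hq ⊢
        by_contra hx
        exact hq ⟨x, rfl, hx⟩
    · intro x hx
      congr 1
      symm
      rw [card_eq_one]
      refine ⟨x, ?_⟩
      ext y
      simp only [mem_filter, mem_univ, true_and, mem_singleton]
      exact ⟨fun hy => hfix y x ((hmk y x).1 hy) (mem_filter.1 hx).2, fun hy => by rw [hy]⟩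

/-- The sum over colourings `p` with `p ∘ τ = p` of `∏ f(p_s)` is a product of power sums of `f`
over the cycles of `τ`. -/
lemma sum_invariant {m : ℕ} (τ : Equiv.Perm (Fin m)) (f : X → R) :
    ∑ p : Fin m → X, (if ∀ s, p (τ s) = p s then ∏ s, f (p s) else 0)
      = (τ.cycleType.map fun d => ∑ x, f x ^ d).prod
        * (∑ x, f x) ^ (univ.filter fun x => τ x = x).card := by
  classical
  have key := prod_quotient_eq τ (fun d => ∑ x, f x ^ d)
  simp only [pow_one] at key
  rw [← key]
  set S := Equiv.Perm.SameCycle.setoid τ with hS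
  rw [Fintype.prod_sum, ← sum_filter]
  symm
  refine sum_bij (fun g _ => fun x => g (Quotient.mk S x)) ?_ ?_ ?_ ?_
  · intro g _
    simp only [mem_filter, mem_univ, true_and]
    intro s
    congr 1
    exact Quotient.sound (Equiv.Perm.sameCycle_apply_left.2 (Equiv.Perm.SameCycle.refl _ _))
  · intro g _ g' _ hgg
    ext q
    induction q using Quotient.inductionOn with
    | h x => exact congrFun hgg x
  · intro p hp
    simp only [mem_filter, mem_univ, true_and] at hp
    have hz : ∀ (n : ℤ) x, p ((τ ^ n) x) = p x := by
      have hn : ∀ (n : ℕ) x, p ((τ ^ n) x) = p x := by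
        intro n
        induction n with
        | zero => simp
        | succ n ih => intro x; rw [pow_succ', Equiv.Perm.mul_apply, hp, ih]
      intro n x
      obtain ⟨n, rfl | rfl⟩ := n.eq_nat_or_neg
      · simpa using hn n x
      · have := hn n ((τ ^ (-(n : ℤ))) x)
        rw [← this, ← zpow_natCast, ← Equiv.Perm.mul_apply, ← _root_.zpow_add]
        simp
    refine ⟨Quotient.lift p ?_, mem_univ _, ?_⟩
    · rintro x y ⟨n, rfl⟩
      exact (hz n x).symm
    · ext x
      rfl
  · intro g _
    simp only
    rw [← prod_fiberwise_of_maps_to (s := univ) (t := univ) (g := fun x => Quotient.mk S x)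
      (fun _ _ => mem_univ _)]
    refine prod_congr rfl fun q _ => ?_
    rw [prod_congr rfl (g := fun _ => f (g q)), prod_const]
    intro x hx
    rw [(mem_filter.1 hx).2]

end Cycles

/-! ### Schur–Weyl duality in the stable range -/

section SchurWeyl

variable {k n : ℕ}

/-- The matrix `A`, indexed by multi-indices, commutes with `g^{⊗ k}` for every unitary `g`. -/
def CommU (A : (Fin k → Fin n) → (Fin k → Fin n) → ℂ) : Prop :=
  ∀ g : UG n, ∀ i l : Fin k → Fin n,
    ∑ j, A i j * ∏ s, (g : Matrix (Fin n) (Fin n) ℂ) (j s) (l s)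
      = ∑ j, (∏ s, (g : Matrix (Fin n) (Fin n) ℂ) (i s) (j s)) * A j l

lemma deltaP_eq (σ : Equiv.Perm (Fin k)) (i j : Fin k → Fin n) :
    (deltaP σ i j : ℂ) = if i ∘ σ = j then 1 else 0 := by
  rw [deltaP, Fintype.prod_ite_zero]
  simp [funext_iff]

lemma commU_deltaP (σ : Equiv.Perm (Fin k)) :
    CommU (fun i j : Fin k → Fin n => (deltaP σ i j : ℂ)) := by
  intro g i l
  have h : ∀ j : Fin k → Fin n, j ∘ σ = l ↔ j = l ∘ σ.symm := fun j =>
    (Equiv.eq_comp_symm σ j l).symm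
  simp only [deltaP_eq, h, ite_mul, mul_ite, one_mul, mul_one, zero_mul, mul_zero,
    sum_ite_eq, sum_ite_eq', mem_univ, if_true]
  rw [← Equiv.prod_comp σ (fun s => (g : Matrix (Fin n) (Fin n) ℂ) (i s) ((l ∘ σ.symm) s))]
  simp

lemma CommU.sub_sum {A : (Fin k → Fin n) → (Fin k → Fin n) → ℂ} (hA : CommU A)
    (c : Equiv.Perm (Fin k) → ℂ) :
    CommU (fun i j => A i j - ∑ σ, c σ * deltaP σ i j) := by
  intro g i l
  simp only [sub_mul, mul_sub, sum_sub_distrib, sum_mul, mul_sum]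
  rw [hA g i l]
  congr 1
  rw [sum_comm, sum_comm (s := univ (α := Fin k → Fin n))]
  refine sum_congr rfl fun σ _ => ?_
  have := congrArg (fun z => c σ * z) (commU_deltaP σ g i l)
  simp only [mul_sum] at this
  simp only [mul_assoc]
  rw [this]
  exact sum_congr rfl fun j _ => by ring

/-- Commutation with the diagonal torus forces the multi-indices of a nonzero entry to have the
same content. The phase used is a primitive `(k+1)`-st root of unity, which separates the
multiplicities `0, …, k`. -/
lemma CommU.count_eq {A : (Fin k → Fin n) → (Fin k → Fin n) → ℂ} (hA : CommU A)
    {i l : Fin k → Fin n} (h : A i l ≠ 0) (v : Fin n) :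
    (univ.filter fun s => i s = v).card = (univ.filter fun s => l s = v).card := by
  have hz := Complex.isPrimitiveRoot_exp (k + 1) (by omega)
  set z := Complex.exp (2 * Real.pi * Complex.I / (k + 1 : ℕ)) with hzdef
  have hnorm : ‖z‖ = 1 := hz.norm'_eq_one (by omega)
  have hzz : z * star z = 1 := by
    rw [Complex.star_def, Complex.mul_conj, Complex.normSq_eq_norm_sq, hnorm]; simp
  set t : Fin n → ℂ := fun x => if x = v then z else 1 with ht
  have htt : ∀ x, t x * star (t x) = 1 := by
    intro x
    by_cases hx : x = v <;> simp only [ht, hx, if_true, if_false, hzz, star_one, mul_one]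
  have hg : Matrix.diagonal t ∈ Matrix.unitaryGroup (Fin n) ℂ := by
    rw [Matrix.mem_unitaryGroup_iff, Matrix.star_eq_conjTranspose, Matrix.diagonal_conjTranspose,
      Matrix.diagonal_mul_diagonal, ← Matrix.diagonal_one]
    congr 1
    ext x
    exact htt x
  have key := hA ⟨_, hg⟩ i l
  have hd : ∀ i j : Fin k → Fin n, ∏ s, Matrix.diagonal t (i s) (j s)
      = if i = j then ∏ s, t (i s) else 0 := by
    intro i j
    simp only [Matrix.diagonal_apply]
    rw [Fintype.prod_ite_zero]
    simp [funext_iff]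
  have hp : ∀ i : Fin k → Fin n, ∏ s, t (i s) = z ^ (univ.filter fun s => i s = v).card := by
    intro i
    simp only [ht]
    rw [prod_ite, prod_const, prod_const_one, mul_one]
  simp only [hd, mul_ite, ite_mul, mul_zero, zero_mul, sum_ite_eq, sum_ite_eq', mem_univ,
    if_true, hp] at key
  rw [mul_comm] at key
  have hc : ∀ i : Fin k → Fin n, (univ.filter fun s => i s = v).card < k + 1 := fun i =>
    Nat.lt_succ_of_le ((card_filter_le _ _).trans (by simp))
  exact (hz.pow_inj (hc _) (hc _) (mul_right_cancel₀ h key)).symm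

/-- If column `l` of `B` vanishes then so does every column `π ∘ l`, by commutation with the
permutation matrix of `π`. -/
lemma CommU.column_perm {B : (Fin k → Fin n) → (Fin k → Fin n) → ℂ} (hB : CommU B)
    {l : Fin k → Fin n} (h : ∀ i, B i l = 0) (π : Equiv.Perm (Fin n)) (i : Fin k → Fin n) :
    B i (π ∘ l) = 0 := by
  set g : Matrix (Fin n) (Fin n) ℂ := Matrix.of fun x y => if x = π y then 1 else 0 with hgdef
  have hg : g ∈ Matrix.unitaryGroup (Fin n) ℂ := by
    rw [Matrix.mem_unitaryGroup_iff']
    ext x y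
    simp [Matrix.mul_apply, hgdef, Matrix.one_apply, Matrix.star_apply, eq_comm]
  have key := hB ⟨g, hg⟩ i l
  have hd : ∀ j : Fin k → Fin n, ∏ s, g (j s) (l s) = if j = π ∘ l then 1 else 0 := by
    intro j
    simp only [hgdef, Matrix.of_apply]
    rw [Fintype.prod_ite_zero]
    simp [funext_iff]
  simpa [hd, h] using key

/-- The reflection in `U(n)` along `e_p - 2 e_q`. Its block on `{p, q}` has entries `3/5`, `4/5`,
`4/5`, `-3/5`, all nonzero. -/
noncomputable def refl (p q : Fin n) : Matrix (Fin n) (Fin n) ℂ :=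
  1 - (2 / 5 : ℂ) • Matrix.vecMulVec (Pi.single p 1 - 2 • Pi.single q 1)
    (Pi.single p 1 - 2 • Pi.single q 1)

lemma refl_apply (p q x y : Fin n) : refl p q x y = (if x = y then 1 else 0) - 2 / 5 *
    (((if x = p then 1 else 0) - 2 * (if x = q then 1 else 0)) *
      ((if y = p then 1 else 0) - 2 * (if y = q then 1 else 0))) := by
  simp [refl, Matrix.vecMulVec_apply, Matrix.one_apply, Pi.single_apply]

lemma refl_mem {p q : Fin n} (hpq : p ≠ q) : refl p q ∈ Matrix.unitaryGroup (Fin n) ℂ := by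
  rw [Matrix.mem_unitaryGroup_iff]
  have hs : star (refl p q) = refl p q := by
    ext x y
    rw [Matrix.star_apply, refl_apply, refl_apply]
    simp only [eq_comm (a := y) (b := x)]
    simp only [star_sub, star_mul', star_div₀, apply_ite star, star_one, star_zero, star_ofNat]
    ring
  rw [hs]
  set v : Fin n → ℂ := Pi.single p 1 - 2 • Pi.single q 1 with hv
  have hvv : v ⬝ᵥ v = 5 := by
    simp [hv, hpq, nsmul_eq_mul, two_mul]
    norm_num
  have h2 : Matrix.vecMulVec v v * Matrix.vecMulVec v v = (5 : ℂ) • Matrix.vecMulVec v v := by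
    rw [Matrix.vecMulVec_mul_vecMulVec, hvv]
    ext; simp [Matrix.vecMulVec_apply]; ring
  rw [refl, ← hv]
  simp only [sub_mul, mul_sub, one_mul, mul_one, smul_mul_assoc, mul_smul_comm, h2]
  module

/-- If `q` is not a value of `l`, and the column of `B` at `l` with `l s` replaced by `q`
vanishes, then column `l` vanishes. Among the terms of
`g^{⊗ k}` applied to the modified basis vector, `g` mixing `p = l s` and `q`, only the one
at `l` has the content of `l`. -/
lemma CommU.column_update {B : (Fin k → Fin n) → (Fin k → Fin n) → ℂ} (hB : CommU B)
    {l : Fin k → Fin n} {s : Fin k} {q : Fin n} (hq : ∀ r, l r ≠ q)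
    (h : ∀ i, B i (Function.update l s q) = 0) (i : Fin k → Fin n) :
    B i l = 0 := by
  by_contra hne
  have hpq : l s ≠ q := hq s
  have key := hB ⟨_, refl_mem hpq⟩ i (Function.update l s q)
  simp only [h, mul_zero, sum_const_zero] at key
  rw [sum_eq_single l] at key
  · refine hne ((mul_eq_zero.1 key).resolve_right (prod_ne_zero_iff.2 fun r _ => ?_))
    rw [refl_apply]
    by_cases hr : r = s
    · subst hr
      simp [hpq, hpq.symm]
    · rw [Function.update_of_ne hr]
      by_cases hrp : l r = l s
      · simp [hrp, hpq]; norm_num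
      · simp [hrp, hq r]
  · intro j _ hj
    by_contra hne'
    obtain ⟨hBj, hprod⟩ := mul_ne_zero_iff.1 hne'
    apply hj
    have hqj : ∀ r, j r ≠ q := by
      have h1 := (hB.count_eq hBj q).symm.trans (hB.count_eq hne q)
      have h2 : (univ.filter fun s => l s = q).card = 0 := by simp [hq]
      rw [h2, card_eq_zero, filter_eq_empty_iff] at h1
      exact fun r => h1 (mem_univ r)
    ext1 r
    have hr := prod_ne_zero_iff.1 hprod r (mem_univ r)
    rw [refl_apply] at hr
    by_contra hjr
    apply hr
    by_cases hrs : r = s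
    · subst hrs
      simp [hjr, hqj r]
    · rw [Function.update_of_ne hrs]
      simp only [hjr, hqj r, hq r, if_false]
      by_cases hjs : j r = l s
      · have : l r ≠ l s := fun h => hjr (hjs.trans h.symm)
        simp [this]
      · simp [hjs]
  · simp

/-- Columns of `B` at all multi-indices vanish once the column at one injective multi-index does:
induction on the number of coincidences. -/
lemma CommU.eq_zero {B : (Fin k → Fin n) → (Fin k → Fin n) → ℂ} (hB : CommU B) (hkn : k ≤ n)
    {e : Fin k → Fin n} (he : Function.Injective e) (h : ∀ i, B i e = 0) :
    ∀ i l, B i l = 0 := by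
  suffices H : ∀ m (l : Fin k → Fin n), k - (univ.image l).card = m → ∀ i, B i l = 0 from
    fun i l => H _ l rfl i
  intro m
  induction m using Nat.strong_induction_on with
  | _ m ih =>
    intro l hl i
    by_cases hinj : Function.Injective l
    · obtain ⟨π, hπ⟩ := Equiv.Perm.exists_extending_pair e l he hinj
      have : l = π ∘ e := by
        ext1 x
        simp [hπ]
      rw [this]
      exact hB.column_perm h π i
    · have hlt : (univ.image l).card < k := by
        refine lt_of_le_of_ne (card_image_le.trans (by simp)) fun hc => hinj ?_
        have := card_image_iff.1 (hc.trans (card_fin k).symm)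
        simpa using this
      obtain ⟨q, -, hq⟩ := exists_mem_notMem_of_card_lt_card
        (s := univ.image l) (t := (univ : Finset (Fin n))) (by simpa using hlt.trans_le hkn)
      have hq' : ∀ r, l r ≠ q := fun r hr => hq (mem_image.2 ⟨r, mem_univ _, hr⟩)
      obtain ⟨s, t, hst, hne⟩ := Function.not_injective_iff.1 hinj
      refine hB.column_update (s := s) hq' (ih _ ?_ _ rfl) i
      have hsub : insert q (univ.image l) ⊆ univ.image (Function.update l s q) := by
        intro x hx
        rcases mem_insert.1 hx with rfl | hx
        · exact mem_image.2 ⟨s, mem_univ _, by simp⟩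
        · obtain ⟨r, -, rfl⟩ := mem_image.1 hx
          by_cases hr : r = s
          · exact mem_image.2 ⟨t, mem_univ _, by rw [Function.update_of_ne hne.symm, hr, hst]⟩
          · exact mem_image.2 ⟨r, mem_univ _, by rw [Function.update_of_ne hr]⟩
      have hcard := card_le_card hsub
      rw [card_insert_of_notMem hq] at hcard
      omega

/-- For `k ≤ n`, a matrix commuting with all `g^{⊗ k}` is a combination of permutation
operators. -/
theorem CommU.exists_coeff {A : (Fin k → Fin n) → (Fin k → Fin n) → ℂ} (hA : CommU A)
    (hkn : k ≤ n) : ∃ c : Equiv.Perm (Fin k) → ℂ, ∀ i l, A i l = ∑ σ, c σ * deltaP σ i l := by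
  set e : Fin k → Fin n := Fin.castLE hkn with he
  have hinj : Function.Injective e := Fin.castLE_injective hkn
  refine ⟨fun σ => A (e ∘ σ.symm) e, fun i l => sub_eq_zero.1 ?_⟩
  have hB := hA.sub_sum (fun σ => A (e ∘ σ.symm) e)
  refine hB.eq_zero hkn hinj (fun i => ?_) i l
  by_contra hne
  have hcnt := hB.count_eq hne
  have hone : ∀ v, (univ.filter fun s => e s = v).card ≤ 1 := fun v =>
    card_le_one.2 fun x hx y hy => hinj ((mem_filter.1 hx).2.trans (mem_filter.1 hy).2.symm)
  have hi : Function.Injective i := by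
    intro x y hxy
    have h1 := hone (i y)
    rw [← hcnt] at h1
    exact card_le_one.1 h1 x (by simp [hxy]) y (by simp)
  have hex : ∀ s, ∃ t, e t = i s := by
    intro s
    have h1 : 0 < (univ.filter fun t => e t = i s).card := by
      rw [← hcnt]
      exact card_pos.2 ⟨s, by simp⟩
    obtain ⟨t, ht⟩ := card_pos.1 h1
    exact ⟨t, (mem_filter.1 ht).2⟩
  choose t ht using hex
  have htinj : Function.Injective t := fun x y hxy => hi (by rw [← ht, ← ht, hxy])
  set ρ : Equiv.Perm (Fin k) := Equiv.ofBijective t (Finite.injective_iff_bijective.1 htinj)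
  have hiρ : i = e ∘ ρ := by
    ext1 s
    exact (ht s).symm
  apply hne
  have hδ : ∀ σ : Equiv.Perm (Fin k), (e ∘ ρ) ∘ σ = e ↔ σ = ρ.symm := by
    intro σ
    constructor
    · intro h
      ext1 x
      rw [Equiv.eq_symm_apply]
      exact hinj (congrFun h x)
    · rintro rfl
      ext1 x
      simp
  simp only [hiρ, deltaP_eq, hδ, mul_ite, mul_one, mul_zero, sum_ite_eq', mem_univ, if_true,
    Equiv.symm_symm, sub_self]

end SchurWeyl

/-! ### Moments of the conjugated signature matrix -/

/-- The random matrix `W = U* I'_{ab} U`. -/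
noncomputable def Wmat (n a : ℕ) (U : UG n) : Matrix (Fin n) (Fin n) ℂ :=
  (U : Matrix (Fin n) (Fin n) ℂ)ᴴ * Iab ℂ n a * (U : Matrix (Fin n) (Fin n) ℂ)

/-- The diagonal entries of `I'_{ab}`. -/
def eps (n a : ℕ) (p : Fin n) : ℂ := if (p : ℕ) < a then 1 else -1

lemma continuous_Wmat (n a : ℕ) : Continuous (Wmat n a) := by
  unfold Wmat
  fun_prop

lemma continuous_prod_Wmat {n a k : ℕ} (i j : Fin k → Fin n) :
    Continuous fun U => ∏ s, Wmat n a U (i s) (j s) :=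
  continuous_finsetProd _ fun _ _ => (continuous_Wmat n a).matrix_elem _ _

lemma Iab_eq (n a : ℕ) : Iab ℂ n a = Matrix.diagonal (eps n a) := by
  ext p q
  simp only [Iab, Matrix.of_apply, Matrix.diagonal_apply, eps]

lemma unitary_col {n : ℕ} (U : UG n) (p q : Fin n) :
    ∑ x, (U : Matrix (Fin n) (Fin n) ℂ) p x * star ((U : Matrix (Fin n) (Fin n) ℂ) q x)
      = if p = q then 1 else 0 := by
  have h := congrFun (congrFun (Matrix.mem_unitaryGroup_iff.1 U.2) p) q
  rw [Matrix.mul_apply, Matrix.one_apply] at h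
  exact h

/-- `∑_i ∏_s w_{i_s, i_{τ(s)}}`, a product of traces of powers of `W`, does not depend on `U`. -/
lemma sum_prod_Wmat {n a k : ℕ} (U : UG n) (τ : Equiv.Perm (Fin k)) :
    ∑ i : Fin k → Fin n, ∏ s, Wmat n a U (i s) (i (τ s))
      = ∑ p : Fin k → Fin n, if ∀ s, p (τ s) = p s then ∏ s, eps n a (p s) else 0 := by
  have hW : ∀ x y, Wmat n a U x y = ∑ p, eps n a p *
      (star ((U : Matrix (Fin n) (Fin n) ℂ) p x) * (U : Matrix (Fin n) (Fin n) ℂ) p y) := by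
    intro x y
    rw [Wmat, Iab_eq, Matrix.mul_apply]
    refine sum_congr rfl fun p _ => ?_
    rw [Matrix.mul_diagonal, Matrix.conjTranspose_apply]
    ring
  simp only [hW, Fintype.prod_sum]
  rw [sum_comm]
  refine sum_congr rfl fun p _ => ?_
  simp only [prod_mul_distrib]
  rw [← mul_sum]
  have h : ∀ i : Fin k → Fin n,
      (∏ s, star ((U : Matrix (Fin n) (Fin n) ℂ) (p s) (i s)))
        * ∏ s, (U : Matrix (Fin n) (Fin n) ℂ) (p s) (i (τ s))
      = ∏ s, ((U : Matrix (Fin n) (Fin n) ℂ) (p s) (i (τ s))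
        * star ((U : Matrix (Fin n) (Fin n) ℂ) (p (τ s)) (i (τ s)))) := by
    intro i
    rw [← Equiv.prod_comp τ (fun s => star ((U : Matrix (Fin n) (Fin n) ℂ) (p s) (i s))),
      prod_mul_distrib, mul_comm]
  simp only [h]
  rw [← Equiv.sum_comp (Equiv.arrowCongr τ (Equiv.refl (Fin n)))]
  simp only [Equiv.arrowCongr_apply, Equiv.coe_refl, Function.comp_apply, id_eq,
    Equiv.symm_apply_apply]
  rw [← Fintype.prod_sum (fun s x => (U : Matrix (Fin n) (Fin n) ℂ) (p s) x
        * star ((U : Matrix (Fin n) (Fin n) ℂ) (p (τ s)) x))]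
  simp only [unitary_col]
  rw [Fintype.prod_ite_zero]
  simp only [prod_const_one, mul_ite, mul_one, mul_zero, eq_comm]

lemma sum_eps (a b : ℕ) : ∑ p, eps (a + b) a p = (a : ℂ) - b := by
  rw [Fin.sum_univ_add]
  simp [eps, sub_eq_add_neg]

lemma sum_eps_pow (a b d : ℕ) :
    ∑ p, eps (a + b) a p ^ d = if d % 2 = 0 then (a : ℂ) + b else (a : ℂ) - b := by
  have hsq : ∀ p, eps (a + b) a p ^ 2 = 1 := by
    intro p
    unfold eps
    split_ifs <;> norm_num
  have h : ∀ p, eps (a + b) a p ^ d = eps (a + b) a p ^ (d % 2) := by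
    intro p
    conv_lhs => rw [← Nat.div_add_mod d 2, pow_add, pow_mul, hsq, one_pow, one_mul]
  simp only [h]
  rcases Nat.mod_two_eq_zero_or_one d with hd | hd
  · simp [hd]
  · simp [hd, sum_eps]

lemma prod_map_parity (M : Multiset ℕ) (x y : ℂ) :
    (M.map fun d => if d % 2 = 0 then x else y).prod
      = x ^ Multiset.card (M.filter fun d => d % 2 = 0)
        * y ^ Multiset.card (M.filter fun d => d % 2 = 1) := by
  induction M using Multiset.induction with
  | empty => simp
  | cons d M ih =>
    rw [Multiset.map_cons, Multiset.prod_cons, ih]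
    rcases Nat.mod_two_eq_zero_or_one d with hd | hd
    · simp [hd, pow_succ]; ring
    · simp [hd, pow_succ]; ring

lemma sum_eps_invariant (a b : ℕ) {k : ℕ} (τ : Equiv.Perm (Fin k)) :
    (∑ p : Fin k → Fin (a + b), if ∀ s, p (τ s) = p s then ∏ s, eps (a + b) a (p s) else 0)
      = ((a : ℂ) + b) ^ evenCycles τ * ((a : ℂ) - b) ^ oddCycles τ := by
  rw [sum_invariant]
  simp only [sum_eps_pow, sum_eps, prod_map_parity]
  rw [evenCycles, oddCycles, pow_add, mul_assoc]

lemma sum_deltaP (n : ℕ) {k : ℕ} (σ τ : Equiv.Perm (Fin k)) :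
    ∑ i : Fin k → Fin n, (deltaP σ i (i ∘ τ) : ℂ) = (n : ℂ) ^ cyc (σ⁻¹ * τ) := by
  have h := sum_invariant (X := Fin n) (σ⁻¹ * τ) (fun _ => (1 : ℂ))
  simp only [prod_const_one, one_pow, sum_const, card_univ, Fintype.card_fin, nsmul_eq_mul,
    mul_one, Multiset.map_const', Multiset.prod_replicate] at h
  rw [cyc, pow_add, ← h, ← Equiv.sum_comp (Equiv.arrowCongr σ (Equiv.refl (Fin n)))]
  refine sum_congr rfl fun p _ => ?_
  rw [deltaP_eq]
  congr 1
  rw [funext_iff, eq_iff_iff]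
  refine forall_congr' fun s => ?_
  simp only [Equiv.arrowCongr_apply, Equiv.coe_refl, Function.comp_apply, id_eq,
    Equiv.symm_apply_apply, Equiv.Perm.mul_apply, Equiv.Perm.inv_def]
  exact eq_comm

/-- Replacing `U` by `U g` conjugates `W` by `g`, so right-invariance of Haar measure gives commutation
of the moment matrix `E[W^{⊗ k}]` with `g^{⊗ k}`. -/
lemma commU_moment {n a k : ℕ} (μ : Measure (UG n)) [IsProbabilityMeasure μ]
    (hμ : ∀ g : UG n, μ.map (fun x => g * x) = μ) :
    CommU (fun i j : Fin k → Fin n => ∫ U, ∏ s, Wmat n a U (i s) (j s) ∂μ) := by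
  intro g i l
  have hgW : ∀ U : UG n, (g : Matrix (Fin n) (Fin n) ℂ) * Wmat n a (U * g)
      = Wmat n a U * (g : Matrix (Fin n) (Fin n) ℂ) := by
    intro U
    have hg : (g : Matrix (Fin n) (Fin n) ℂ) * (g : Matrix (Fin n) (Fin n) ℂ)ᴴ = 1 :=
      Matrix.mem_unitaryGroup_iff.1 g.2
    simp only [Wmat, Submonoid.coe_mul, Matrix.conjTranspose_mul, ← Matrix.mul_assoc, hg,
      Matrix.one_mul]
  simp only [← integral_mul_const, ← integral_const_mul]
  rw [← integral_finsetSum, ← integral_finsetSum]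
  · rw [← integral_mul_right μ hμ g
      (f := fun U => ∑ j : Fin k → Fin n, (∏ s, (g : Matrix (Fin n) (Fin n) ℂ) (i s) (j s))
        * ∏ s, Wmat n a U (j s) (l s))]
    · congr 1
      ext U
      simp only [← prod_mul_distrib]
      rw [← Fintype.prod_sum (fun s x => Wmat n a U (i s) x
          * (g : Matrix (Fin n) (Fin n) ℂ) x (l s)),
        ← Fintype.prod_sum (fun s x => (g : Matrix (Fin n) (Fin n) ℂ) (i s) x
          * Wmat n a (U * g) x (l s))]
      simp only [← Matrix.mul_apply, hgW]
    · exact continuous_finsetSum _ fun j _ => continuous_const.mul (continuous_prod_Wmat _ _)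
  · exact fun j _ => integrable_of_continuous μ (continuous_const.mul (continuous_prod_Wmat _ _))
  · exact fun j _ => integrable_of_continuous μ ((continuous_prod_Wmat _ _).mul continuous_const)

lemma conv_assoc {k : ℕ} (f g h : Equiv.Perm (Fin k) → ℂ) :
    conv (conv f g) h = conv f (conv g h) := by
  ext σ
  simp only [conv, sum_mul, mul_sum]
  rw [sum_comm]
  refine sum_congr rfl fun τ _ => ?_
  rw [← Equiv.sum_comp (Equiv.mulLeft τ)]
  refine sum_congr rfl fun ρ _ => ?_
  simp [mul_assoc]

lemma conv_deltaId {k : ℕ} (f : Equiv.Perm (Fin k) → ℂ) : conv f deltaId = f := by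
  ext σ
  simp [conv, deltaId, inv_mul_eq_one]

/-- Weingarten calculus for class A III, Theorem 4.1:
`W = U* I'_{ab} U`. -/
theorem stmt12 (a b k : ℕ) (hb : 1 ≤ b) (hab : b ≤ a) (hk : 0 < k) (hnk : k ≤ a + b)
    (μ : Measure (UG (a + b))) [IsProbabilityMeasure μ]
    (hμ : ∀ g : UG (a + b), μ.map (fun x => g * x) = μ)
    (WgU : Equiv.Perm (Fin k) → ℂ)
    (hWg : conv (fun σ => ((a + b : ℕ) : ℂ) ^ cyc σ) WgU = deltaId)
    (hWg' : conv WgU (fun σ => ((a + b : ℕ) : ℂ) ^ cyc σ) = deltaId)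
    (i j : Fin k → Fin (a + b)) :
    ∫ U : UG (a + b), ∏ s : Fin k,
        ((U : Matrix (Fin (a + b)) (Fin (a + b)) ℂ)ᴴ * Iab ℂ (a + b) a
          * (U : Matrix (Fin (a + b)) (Fin (a + b)) ℂ)) (i s) (j s) ∂μ
      = ∑ σ : Equiv.Perm (Fin k),
          deltaP σ i j *
            conv (fun τ => ((a : ℂ) + b) ^ evenCycles τ * ((a : ℂ) - b) ^ oddCycles τ)
              WgU σ := by

  change ∫ U, ∏ s, Wmat (a + b) a U (i s) (j s) ∂μ = _
  obtain ⟨c, hc⟩ := (commU_moment (a := a) (k := k) μ hμ).exists_coeff hnk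
  -- Contracting `l = i ∘ τ` and summing over `i` gives `T^{AIII} = c * T^U`.
  have hT : conv c (fun σ => ((a + b : ℕ) : ℂ) ^ cyc σ)
      = fun τ => ((a : ℂ) + b) ^ evenCycles τ * ((a : ℂ) - b) ^ oddCycles τ := by
    ext τ
    rw [← sum_eps_invariant]
    have h1 : ∑ i : Fin k → Fin (a + b),
        ∫ U, ∏ s, Wmat (a + b) a U (i s) ((i ∘ τ) s) ∂μ
        = ∑ p : Fin k → Fin (a + b),
          if ∀ s, p (τ s) = p s then ∏ s, eps (a + b) a (p s) else 0 := by
      rw [← integral_finsetSum]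
      · simp only [Function.comp_apply, sum_prod_Wmat]
        simp
      · exact fun i _ => integrable_of_continuous μ (continuous_prod_Wmat _ _)
    rw [← h1]
    simp only [conv, hc]
    rw [sum_comm]
    refine sum_congr rfl fun σ _ => ?_
    rw [← mul_sum, sum_deltaP]
  rw [← hT, conv_assoc, hWg, conv_deltaId, hc]
  exact sum_congr rfl fun σ _ => mul_comm _ _

end WgPaper
end
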